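/- Let (X,f) be a TDS and let μ₁, μ₂ ∈ E(X,f) be ergodic measures with h_{μ₁}(f) > h_{μ₂}(f). Then μ = ½μ₁ + ½μ₂ is f-invariant and satisfies E_μ(f) = h_{μ₁}(f) while h_μ(f) = ½(h_{μ₁}(f) + h_{μ₂}(f)); in particular E_μ(f) > h_μ(f), so the inequality E_μ(f) ≥ h_μ(f) can be strict. -/

import Mathlib

open MeasureTheory Filter Set
open scoped ENNReal NNReal

namespace Paper

variable {X : Type*}

/-- Birkhoff sum `S_n φ(x) = ∑_{i<n} φ(f^i x)`. -/
def birk (f : X → X) (φ : X → ℝ) (n : ℕ) (x : X) : ℝ :=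
  ∑ i ∈ Finset.range n, φ (f^[i] x)

section Metric

variable [MetricSpace X]

/-- The Bowen ball `B_n(x, ε) = {y : d_n(x,y) < ε}`. -/
def bowenBall (f : X → X) (x : X) (n : ℕ) (ε : ℝ) : Set X :=
  {y | ∀ i < n, dist (f^[i] x) (f^[i] y) < ε}

/-- The number of indices `0 ≤ j ≤ n-1` with `dist (f^j x, f^j y) > ε`. -/
noncomputable def sepCount (f : X → X) (ε : ℝ) (n : ℕ) (x y : X) : ℕ :=
  Nat.card {j : ℕ // j < n ∧ ε < dist (f^[j] x) (f^[j] y)}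

/-- `A` is an `(n,ε)`-separated set. -/
def IsNSep (f : X → X) (n : ℕ) (ε : ℝ) (A : Set X) : Prop :=
  ∀ x ∈ A, ∀ y ∈ A, x ≠ y → ∃ j < n, ε < dist (f^[j] x) (f^[j] y)

/-- `A` is a `(δ,n,ε)`-separated set. -/
def IsDeltaSep (f : X → X) (δ : ℝ) (n : ℕ) (ε : ℝ) (A : Set X) : Prop :=
  ∀ x ∈ A, ∀ y ∈ A, x ≠ y → δ * n ≤ (sepCount f ε n x y : ℝ)

end Metric

section Entropy

variable [MeasurableSpace X]

/-- A finite measurable partition of `X`. -/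
def IsFinPartition (s : Finset (Set X)) : Prop :=
  (∀ A ∈ s, MeasurableSet A) ∧ ⋃₀ (s : Set (Set X)) = Set.univ ∧
    (s : Set (Set X)).Pairwise Disjoint

/-- The entropy `H(μ, ⋁_{i<n} f^{-i} ξ)` of the `n`-th dynamical refinement of the
partition `s` (with the convention `0 · log 0 = 0`). -/
noncomputable def dynH (f : X → X) (μ : Measure X) (s : Finset (Set X)) (n : ℕ) : ℝ :=
  -∑ w : Fin n → {A // A ∈ s},
      (μ (⋂ i : Fin n, f^[(i : ℕ)] ⁻¹' ((w i : Set X)))).toReal *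
        Real.log (μ (⋂ i : Fin n, f^[(i : ℕ)] ⁻¹' ((w i : Set X)))).toReal

/-- The Kolmogorov–Sinai entropy `h_μ(f)`, as an extended real:
`sup_ξ lim_n H(μ, ξ^n)/n`. -/
noncomputable def ksEntropy (f : X → X) (μ : Measure X) : EReal :=
  ⨆ (s : Finset (Set X)) (_ : IsFinPartition s),
    Filter.atTop.liminf (fun n : ℕ => ((dynH f μ s n / n : ℝ) : EReal))

end Entropy

section Pressure

variable [MetricSpace X] [MeasurableSpace X]

/-- Brin–Katok local entropy `h_μ(x) = lim_{ε→0} liminf_n -(1/n) log μ(B_n(x,ε))`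
(the limit in `ε` being a supremum by monotonicity). -/
noncomputable def localEntropy (f : X → X) (μ : Measure X) (x : X) : EReal :=
  ⨆ (ε : ℝ) (_ : 0 < ε),
    Filter.atTop.liminf (fun n : ℕ =>
      (((n : ℝ)⁻¹ : ℝ) : EReal) * (-(μ (bowenBall f x n ε)).log))

/-- The point-wise measure theoretic pressure
`P_μ(f,φ,x) = lim_{ε→0} liminf_n (1/n)[-log μ(B_n(x,ε)) + S_nφ(x)]`. -/
noncomputable def ptPressure (f : X → X) (φ : X → ℝ) (μ : Measure X) (x : X) : EReal :=
  ⨆ (ε : ℝ) (_ : 0 < ε),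
    Filter.atTop.liminf (fun n : ℕ =>
      (((n : ℝ)⁻¹ : ℝ) : EReal) * (-(μ (bowenBall f x n ε)).log + ((birk f φ n x : ℝ) : EReal)))

/-- `M(Z,φ,α,N,ε)`: infimum of `∑_i exp(-α n_i + S_{n_i}φ(x_i))` over countable covers
of `Z` by Bowen balls `B_{n_i}(x_i,ε)` with `n_i ≥ N`. -/
noncomputable def Mcov (f : X → X) (φ : X → ℝ) (Z : Set X) (α : ℝ) (N : ℕ) (ε : ℝ) : ℝ≥0∞ :=
  ⨅ (c : ℕ → X × ℕ)
    (_ : (∀ i, N ≤ (c i).2) ∧ Z ⊆ ⋃ i, bowenBall f (c i).1 (c i).2 ε),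
      ∑' i, ENNReal.ofReal (Real.exp (-α * ((c i).2 : ℝ) + birk f φ (c i).2 (c i).1))

/-- `m(Z,φ,α,ε) = lim_{N→∞} M(Z,φ,α,N,ε)` (a supremum, by monotonicity in `N`). -/
noncomputable def mZ (f : X → X) (φ : X → ℝ) (Z : Set X) (α : ℝ) (ε : ℝ) : ℝ≥0∞ :=
  ⨆ N : ℕ, Mcov f φ Z α N ε

/-- `P_Z(f,φ,ε) = inf {α : m(Z,φ,α,ε) = 0}`, the jump-up point of `α ↦ m(Z,φ,α,ε)`. -/
noncomputable def PZeps (f : X → X) (φ : X → ℝ) (Z : Set X) (ε : ℝ) : EReal :=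
  ⨅ (α : ℝ) (_ : mZ f φ Z α ε = 0), ((α : ℝ) : EReal)

/-- The topological pressure `P_Z(f,φ) = lim_{ε→0} P_Z(f,φ,ε)` on an arbitrary set `Z`
(the limit in `ε` being a supremum by monotonicity). -/
noncomputable def PZ (f : X → X) (φ : X → ℝ) (Z : Set X) : EReal :=
  ⨆ (ε : ℝ) (_ : 0 < ε), PZeps f φ Z ε

/-- The measure theoretic pressure
`P_μ(f,φ) = lim_{ε→0} inf {P_Z(f,φ,ε) : Z Borel, μ(Z) = 1}`. -/
noncomputable def Pmu (f : X → X) (φ : X → ℝ) (μ : Measure X) : EReal :=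
  ⨆ (ε : ℝ) (_ : 0 < ε),
    ⨅ (Z : Set X) (_ : MeasurableSet Z ∧ μ Z = 1), PZeps f φ Z ε

end Pressure

end Paper

open Paper

/-!
Let `μ = a • μ₁ + b • μ₂` be a convex combination with positive weights. A Borel set has full
`μ`-measure if and only if it has full measure for both `μ₁` and `μ₂`, and covers of two sets can be
merged, so `E_μ` is the maximum of `E_μ₁` and `E_μ₂`, whereas the entropy is affine in the measure.
It remains to see that `E_ν = h_ν` for every ergodic `ν`.

*`E_ν ≤ h_ν`.* Code `X` by a finite partition into sets of diameter less than `ε`, of entropy rate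
`h`. By Fatou's lemma the words of length `n` seen by a point have measure at least `exp (-b n)`
infinitely often on a set of positive measure, for every `b > h`, and ergodicity upgrades this to
almost every point. There are at most `exp (b n)` words this heavy, and each is contained in a Bowen
ball, so their union over `n ≥ N` is an economical cover of a set of full measure.

*`h_ν ≤ E_ν`.* This holds for every invariant `ν`. A cover of almost all of `X` by Bowen balls with
`∑ exp (-α nᵢ) ≤ 1` serves as a code book: the itinerary of a point is transmitted by naming a Bowen
ball containing the current point, skipping ahead `nᵢ` steps, and continuing from there, with a
noisy channel accounting for the few times at which the ball does not determine the symbol.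
Comparing the likelihood of a word under this code with its `ν`-measure through Gibbs' inequality
bounds the entropy rate of the partition by `α` up to a small error.
-/

namespace Paper

open scoped Topology

section StaticEntropy

variable {X ι κ : Type*}

lemma negMulLog_add_le {x y : ℝ} (hx : 0 ≤ x) (hy : 0 ≤ y) :
    (x + y).negMulLog ≤ x.negMulLog + y.negMulLog := by
  have mul_log_le {u v : ℝ} (hu : 0 ≤ u) (huv : u ≤ v) : u * u.log ≤ u * v.log := by
    rcases hu.eq_or_lt with rfl | hu'
    · simp
    · exact mul_le_mul_of_nonneg_left (Real.log_le_log hu' huv) hu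
  have h₁ := mul_log_le hx (le_add_of_nonneg_right hy)
  have h₂ := mul_log_le hy (le_add_of_nonneg_left hx)
  simp only [Real.negMulLog]
  linarith

lemma negMulLog_sum_le (s : Finset ι) {p : ι → ℝ} (hp : ∀ i ∈ s, 0 ≤ p i) :
    (∑ i ∈ s, p i).negMulLog ≤ ∑ i ∈ s, (p i).negMulLog :=
  Finset.le_sum_of_subadditive_on_pred Real.negMulLog (0 ≤ ·) Real.negMulLog_zero.le
    (fun _ _ ↦ negMulLog_add_le) (fun _ _ ↦ add_nonneg) p hp

variable [MeasurableSpace X]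

/-- The measure of the cell containing `x` of the partition of `X` into the fibres of `φ`. -/
noncomputable def fiberMeasure (μ : Measure X) (φ : X → ι) (x : X) : ℝ :=
  μ.real (φ ⁻¹' {φ x})

/-- The Shannon entropy of the partition of `X` into the fibres of `φ`. Partitions are encoded by
labelling maps, so that joins become pairings and refinements become factorizations. -/
noncomputable def fiberEntropy [Fintype ι] (μ : Measure X) (φ : X → ι) : ℝ :=
  ∑ i, (μ.real (φ ⁻¹' {i})).negMulLog

lemma fiberEntropy_nonneg [Fintype ι] (μ : Measure X) [IsZeroOrProbabilityMeasure μ] (φ : X → ι) :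
    0 ≤ fiberEntropy μ φ :=
  Finset.sum_nonneg fun _ _ ↦ Real.negMulLog_nonneg measureReal_nonneg measureReal_le_one

lemma fiberEntropy_comp_le [Fintype ι] [Fintype κ] [MeasurableSpace κ] [MeasurableSingletonClass κ]
    (μ : Measure X) [IsFiniteMeasure μ] {ψ : X → κ} (hψ : Measurable ψ) (π : κ → ι) :
    fiberEntropy μ (π ∘ ψ) ≤ fiberEntropy μ ψ := by
  classical
  have measureReal_fiber (i : ι) :
      μ.real (π ∘ ψ ⁻¹' {i}) = ∑ j with π j = i, μ.real (ψ ⁻¹' {j}) := by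
    rw [sum_measureReal_preimage_singleton _ fun j _ ↦ hψ (measurableSet_singleton j)]
    congr 1
    ext x
    simp
  calc fiberEntropy μ (π ∘ ψ)
      = ∑ i, (∑ j with π j = i, μ.real (ψ ⁻¹' {j})).negMulLog :=
        Finset.sum_congr rfl fun i _ ↦ by rw [measureReal_fiber]
    _ ≤ ∑ i, ∑ j with π j = i, (μ.real (ψ ⁻¹' {j})).negMulLog :=
        Finset.sum_le_sum fun _ _ ↦ negMulLog_sum_le _ fun _ _ ↦ measureReal_nonneg
    _ = fiberEntropy μ ψ := Finset.sum_fiberwise _ _ _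

lemma ae_fiberMeasure_pos [Countable ι] (μ : Measure X) [IsFiniteMeasure μ] (φ : X → ι) :
    ∀ᵐ x ∂μ, 0 < fiberMeasure μ φ x := by
  have null_fiber (i : ι) : ∀ᵐ x ∂μ, φ x = i → μ (φ ⁻¹' {i}) ≠ 0 := by
    by_cases hi : μ (φ ⁻¹' {i}) = 0
    · filter_upwards [measure_eq_zero_iff_ae_notMem.1 hi] with x hx h using absurd h hx
    · exact .of_forall fun _ _ ↦ hi
  filter_upwards [ae_all_iff.2 null_fiber] with x hx
  exact measureReal_nonneg.lt_of_ne' ((measureReal_ne_zero_iff).2 (hx _ rfl))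

variable [MeasurableSpace ι] [MeasurableSingletonClass ι] {φ : X → ι}

lemma integrable_comp_of_finite [Finite ι] (μ : Measure X) [IsFiniteMeasure μ] (hφ : Measurable φ)
    (F : ι → ℝ) : Integrable (fun x ↦ F (φ x)) μ :=
  Integrable.of_finite.comp_measurable hφ

lemma integral_comp_eq_sum [Fintype ι] (μ : Measure X) [IsFiniteMeasure μ] (hφ : Measurable φ)
    (F : ι → ℝ) : ∫ x, F (φ x) ∂μ = ∑ i, μ.real (φ ⁻¹' {i}) * F i := by
  rw [← integral_map hφ.aemeasurable Measurable.of_discrete.aestronglyMeasurable,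
    integral_fintype .of_finite]
  simp [map_measureReal_apply hφ]

lemma sum_measureReal_fiber [Fintype ι] (μ : Measure X) [IsProbabilityMeasure μ]
    (hφ : Measurable φ) : ∑ i, μ.real (φ ⁻¹' {i}) = 1 := by
  simpa using (integral_comp_eq_sum μ hφ fun _ ↦ 1).symm

lemma integrable_neg_log_fiberMeasure [Finite ι] (μ : Measure X) [IsFiniteMeasure μ]
    (hφ : Measurable φ) : Integrable (fun x ↦ -(fiberMeasure μ φ x).log) μ :=
  integrable_comp_of_finite μ hφ fun i ↦ -(μ.real (φ ⁻¹' {i})).log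

lemma fiberEntropy_eq_integral [Fintype ι] (μ : Measure X) [IsFiniteMeasure μ]
    (hφ : Measurable φ) : fiberEntropy μ φ = ∫ x, -(fiberMeasure μ φ x).log ∂μ := by
  simp [fiberMeasure, integral_comp_eq_sum μ hφ fun i ↦ -(μ.real (φ ⁻¹' {i})).log, fiberEntropy,
    Real.negMulLog]

/-- Gibbs' inequality: coding `φ` by any sub-probability vector `q` costs at least the entropy. -/
lemma fiberEntropy_le_integral [Fintype ι] (μ : Measure X) [IsProbabilityMeasure μ]
    (hφ : Measurable φ) {q : ι → ℝ} (hq : ∀ i, 0 ≤ q i) (hsum : ∑ i, q i ≤ 1) {G : X → ℝ}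
    (hG : Integrable G μ) (hle : ∀ᵐ x ∂μ, Real.exp (-G x) ≤ q (φ x)) :
    fiberEntropy μ φ ≤ ∫ x, G x ∂μ := by
  set p : ι → ℝ := fun i ↦ μ.real (φ ⁻¹' {i})
  have hratio : Integrable (fun x ↦ q (φ x) / p (φ x) - 1) μ :=
    integrable_comp_of_finite μ hφ fun i ↦ q i / p i - 1
  have hratio_le : ∫ x, q (φ x) / p (φ x) - 1 ∂μ ≤ 0 := by
    rw [integral_comp_eq_sum μ hφ fun i ↦ q i / p i - 1]
    calc ∑ i, p i * (q i / p i - 1) ≤ ∑ i, (q i - p i) := by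
          refine Finset.sum_le_sum fun i _ ↦ ?_
          rcases eq_or_ne (p i) 0 with h0 | h0
          · simp [h0, hq i]
          · exact (by field_simp : p i * (q i / p i - 1) = q i - p i).le
      _ ≤ 0 := by
          rw [Finset.sum_sub_distrib, sum_measureReal_fiber μ hφ]
          linarith
  calc fiberEntropy μ φ = ∫ x, -(p (φ x)).log ∂μ := fiberEntropy_eq_integral μ hφ
    _ ≤ ∫ x, G x + (q (φ x) / p (φ x) - 1) ∂μ := by
        refine integral_mono_ae (integrable_neg_log_fiberMeasure μ hφ) (hG.add hratio) ?_
        filter_upwards [hle, ae_fiberMeasure_pos μ φ] with x hx hpx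
        have hqx : 0 < q (φ x) := (Real.exp_pos _).trans_le hx
        have hG_le : -G x ≤ (q (φ x)).log := (Real.le_log_iff_exp_le hqx).2 hx
        have hlog := Real.log_le_sub_one_of_pos (div_pos hqx hpx)
        rw [Real.log_div hqx.ne' hpx.ne'] at hlog
        change (q (φ x)).log - (p (φ x)).log ≤ q (φ x) / p (φ x) - 1 at hlog
        linarith
    _ ≤ ∫ x, G x ∂μ := by
        rw [integral_add hG hratio]
        linarith

lemma fiberEntropy_prodMk_le [Fintype ι] [Fintype κ] [MeasurableSpace κ]
    [MeasurableSingletonClass κ] (μ : Measure X) [IsProbabilityMeasure μ] {ψ : X → κ}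
    (hφ : Measurable φ) (hψ : Measurable ψ) :
    fiberEntropy μ (fun x ↦ (φ x, ψ x)) ≤ fiberEntropy μ φ + fiberEntropy μ ψ := by
  have hφi := integrable_neg_log_fiberMeasure μ hφ
  have hψi := integrable_neg_log_fiberMeasure μ hψ
  rw [fiberEntropy_eq_integral μ hφ, fiberEntropy_eq_integral μ hψ, ← integral_add hφi hψi]
  refine fiberEntropy_le_integral μ (hφ.prodMk hψ)
    (q := fun z ↦ μ.real (φ ⁻¹' {z.1}) * μ.real (ψ ⁻¹' {z.2}))
    (fun _ ↦ mul_nonneg measureReal_nonneg measureReal_nonneg) ?_ (hφi.add hψi) ?_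
  · simp only [Fintype.sum_prod_type, ← Finset.sum_mul_sum, sum_measureReal_fiber μ hφ,
      sum_measureReal_fiber μ hψ, one_mul, le_refl]
  · filter_upwards [ae_fiberMeasure_pos μ φ, ae_fiberMeasure_pos μ ψ] with x hx hx'
    rw [neg_add, neg_neg, neg_neg, Real.exp_add]
    exact (congrArg₂ (· * ·) (Real.exp_log hx) (Real.exp_log hx')).le

lemma fiberEntropy_comp_of_measurePreserving [Fintype ι] {μ : Measure X} {f : X → X}
    (hf : MeasurePreserving f μ μ) (hφ : Measurable φ) :
    fiberEntropy μ (φ ∘ f) = fiberEntropy μ φ :=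
  Finset.sum_congr rfl fun i _ ↦ by
    rw [preimage_comp, hf.measureReal_preimage (hφ (measurableSet_singleton i)).nullMeasurableSet]

lemma ne_top_of_add_eq_one {a b : ℝ≥0∞} (hab : a + b = 1) : a ≠ ∞ ∧ b ≠ ∞ :=
  ENNReal.add_ne_top.1 (hab ▸ ENNReal.one_ne_top)

lemma toReal_add_toReal_of_add_eq_one {a b : ℝ≥0∞} (hab : a + b = 1) :
    a.toReal + b.toReal = 1 := by
  obtain ⟨ha, hb⟩ := ne_top_of_add_eq_one hab
  rw [← ENNReal.toReal_add ha hb, hab, ENNReal.toReal_one]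

end StaticEntropy

section ConvexCombination

variable {X ι : Type*} [MeasurableSpace X] {a b : ℝ≥0∞} (hab : a + b = 1) (μ₁ μ₂ : Measure X)

include hab

lemma isProbabilityMeasure_smul_add_smul [IsProbabilityMeasure μ₁] [IsProbabilityMeasure μ₂] :
    IsProbabilityMeasure (a • μ₁ + b • μ₂) :=
  ⟨by simp [hab]⟩

lemma measureReal_smul_add_smul [IsFiniteMeasure μ₁] [IsFiniteMeasure μ₂] (A : Set X) :
    (a • μ₁ + b • μ₂).real A = a.toReal * μ₁.real A + b.toReal * μ₂.real A := by
  obtain ⟨ha, hb⟩ := ne_top_of_add_eq_one hab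
  have := Measure.smul_finite μ₁ ha
  have := Measure.smul_finite μ₂ hb
  rw [measureReal_add_apply, measureReal_ennreal_smul_apply, measureReal_ennreal_smul_apply]

variable [Fintype ι]

lemma le_fiberEntropy_smul_add_smul [IsFiniteMeasure μ₁] [IsFiniteMeasure μ₂] (φ : X → ι) :
    a.toReal * fiberEntropy μ₁ φ + b.toReal * fiberEntropy μ₂ φ ≤
      fiberEntropy (a • μ₁ + b • μ₂) φ := by
  simp only [fiberEntropy, Finset.mul_sum, ← Finset.sum_add_distrib]
  refine Finset.sum_le_sum fun i _ ↦ ?_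
  rw [measureReal_smul_add_smul hab]
  exact Real.concaveOn_negMulLog.2 measureReal_nonneg measureReal_nonneg ENNReal.toReal_nonneg
    ENNReal.toReal_nonneg (toReal_add_toReal_of_add_eq_one hab)

lemma fiberEntropy_smul_add_smul_le [MeasurableSpace ι] [MeasurableSingletonClass ι]
    [IsProbabilityMeasure μ₁] [IsProbabilityMeasure μ₂] {φ : X → ι} (hφ : Measurable φ) :
    fiberEntropy (a • μ₁ + b • μ₂) φ ≤
      a.toReal * fiberEntropy μ₁ φ + b.toReal * fiberEntropy μ₂ φ +
        (a.toReal.negMulLog + b.toReal.negMulLog) := by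
  have sum_negMulLog_mul (t : ℝ) (ν : Measure X) [IsProbabilityMeasure ν] :
      ∑ i, (t * ν.real (φ ⁻¹' {i})).negMulLog = t.negMulLog + t * fiberEntropy ν φ := by
    simp only [Real.negMulLog_mul, Finset.sum_add_distrib, ← Finset.sum_mul, ← Finset.mul_sum,
      sum_measureReal_fiber ν hφ, one_mul, fiberEntropy]
  calc fiberEntropy (a • μ₁ + b • μ₂) φ
      ≤ ∑ i, ((a.toReal * μ₁.real (φ ⁻¹' {i})).negMulLog +
          (b.toReal * μ₂.real (φ ⁻¹' {i})).negMulLog) := by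
        refine Finset.sum_le_sum fun i _ ↦ ?_
        rw [measureReal_smul_add_smul hab]
        exact negMulLog_add_le (by positivity) (by positivity)
    _ = _ := by
        rw [Finset.sum_add_distrib, sum_negMulLog_mul, sum_negMulLog_mul]
        ring

end ConvexCombination

section Itinerary

variable {X S T : Type*}

/-- The labels under `g` of the first `n` points of the `f`-orbit of `x`. The fibres of
`itinerary f g n` form the dynamical refinement `⋁_{i<n} f⁻ⁱ ξ` of the partition `ξ` into the
fibres of `g`. -/
def itinerary (f : X → X) (g : X → S) (n : ℕ) (x : X) : Fin n → S :=
  fun i ↦ g (f^[i] x)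

lemma itinerary_add (f : X → X) (g : X → S) (m n : ℕ) (x : X) :
    itinerary f g (m + n) x = Fin.append (itinerary f g m x) (itinerary f g n (f^[m] x)) := by
  ext i
  refine Fin.addCases (fun i ↦ ?_) (fun i ↦ ?_) i
  · simp [itinerary]
  · simp [itinerary, ← Function.iterate_add_apply, add_comm]

variable [MeasurableSpace X]

lemma measurable_itinerary [MeasurableSpace S] {f : X → X} (hf : Measurable f) {g : X → S}
    (hg : Measurable g) (n : ℕ) : Measurable (itinerary f g n) :=
  measurable_pi_lambda _ fun i ↦ hg.comp (hf.iterate i)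

/-- The entropy `h_μ(f, ξ)` of `f` relative to the partition `ξ` into the fibres of `g`. The
infimum is the limit of `H(μ, ξⁿ) / n` for invariant `μ`, see `tendsto_entropyRate`. -/
noncomputable def entropyRate [Fintype S] (f : X → X) (μ : Measure X) (g : X → S) : ℝ :=
  sInf ((fun n : ℕ ↦ fiberEntropy μ (itinerary f g n) / n) '' Ici 1)

lemma entropyRate_nonneg [Fintype S] (f : X → X) (μ : Measure X) [IsProbabilityMeasure μ]
    (g : X → S) : 0 ≤ entropyRate f μ g := by
  refine Real.sInf_nonneg ?_
  rintro _ ⟨n, -, rfl⟩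
  exact div_nonneg (fiberEntropy_nonneg μ _) n.cast_nonneg

variable [Fintype S] [Fintype T] [MeasurableSpace S] [MeasurableSingletonClass S]
  [MeasurableSpace T] [MeasurableSingletonClass T] {f : X → X} {μ : Measure X}
  [IsProbabilityMeasure μ] {g : X → S}

lemma subadditive_fiberEntropy_itinerary (hf : MeasurePreserving f μ μ) (hg : Measurable g) :
    Subadditive fun n ↦ fiberEntropy μ (itinerary f g n) := by
  intro m n
  have hm := measurable_itinerary hf.measurable hg m
  have hn := measurable_itinerary hf.measurable hg n
  have hfm : Measurable (itinerary f g n ∘ f^[m]) := hn.comp (hf.measurable.iterate m)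
  calc fiberEntropy μ (itinerary f g (m + n))
      = fiberEntropy μ ((fun w : (Fin m → S) × (Fin n → S) ↦ Fin.append w.1 w.2) ∘
          fun x ↦ (itinerary f g m x, (itinerary f g n ∘ f^[m]) x)) :=
        congrArg _ (funext (itinerary_add f g m n))
    _ ≤ fiberEntropy μ fun x ↦ (itinerary f g m x, (itinerary f g n ∘ f^[m]) x) :=
        fiberEntropy_comp_le μ (hm.prodMk hfm) _
    _ ≤ fiberEntropy μ (itinerary f g m) + fiberEntropy μ (itinerary f g n ∘ f^[m]) :=
        fiberEntropy_prodMk_le μ hm hfm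
    _ = _ := by rw [fiberEntropy_comp_of_measurePreserving (hf.iterate m) hn]

lemma tendsto_entropyRate (hf : MeasurePreserving f μ μ) (hg : Measurable g) :
    Tendsto (fun n : ℕ ↦ fiberEntropy μ (itinerary f g n) / n) atTop (𝓝 (entropyRate f μ g)) := by
  have hsub := subadditive_fiberEntropy_itinerary hf hg
  have hlim : entropyRate f μ g = hsub.lim := by rw [Subadditive.lim, entropyRate]
  rw [hlim]
  refine hsub.tendsto_lim ⟨0, ?_⟩
  rintro _ ⟨n, rfl⟩
  exact div_nonneg (fiberEntropy_nonneg μ _) n.cast_nonneg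

lemma entropyRate_comp_le (hf : MeasurePreserving f μ μ) (hg : Measurable g) (π : S → T) :
    entropyRate f μ (π ∘ g) ≤ entropyRate f μ g := by
  refine le_of_tendsto_of_tendsto' (tendsto_entropyRate hf (Measurable.of_discrete.comp hg))
    (tendsto_entropyRate hf hg) fun n ↦ ?_
  gcongr
  exact fiberEntropy_comp_le μ (measurable_itinerary hf.measurable hg n) (π ∘ ·)

lemma measurePreserving_smul_add_smul {μ₁ μ₂ : Measure X} (a b : ℝ≥0∞)
    (h₁ : MeasurePreserving f μ₁ μ₁) (h₂ : MeasurePreserving f μ₂ μ₂) :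
    MeasurePreserving f (a • μ₁ + b • μ₂) (a • μ₁ + b • μ₂) :=
  (h₁.smul_measure a).add_measure (h₂.smul_measure b)

lemma entropyRate_smul_add_smul {μ₁ μ₂ : Measure X} [IsProbabilityMeasure μ₁]
    [IsProbabilityMeasure μ₂] {a b : ℝ≥0∞} (hab : a + b = 1) (h₁ : MeasurePreserving f μ₁ μ₁)
    (h₂ : MeasurePreserving f μ₂ μ₂) (hg : Measurable g) :
    entropyRate f (a • μ₁ + b • μ₂) g =
      a.toReal * entropyRate f μ₁ g + b.toReal * entropyRate f μ₂ g := by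
  have := isProbabilityMeasure_smul_add_smul hab μ₁ μ₂
  have hlim := ((tendsto_entropyRate h₁ hg).const_mul a.toReal).add
    ((tendsto_entropyRate h₂ hg).const_mul b.toReal)
  have hmix := tendsto_entropyRate (measurePreserving_smul_add_smul a b h₁ h₂) hg
  have hgap := tendsto_const_div_atTop_nhds_zero_nat (a.toReal.negMulLog + b.toReal.negMulLog)
  refine le_antisymm ?_ (le_of_tendsto_of_tendsto' hlim hmix fun n ↦ ?_)
  · refine (le_of_tendsto_of_tendsto' hmix (hlim.add hgap) fun n ↦ ?_).trans_eq (add_zero _)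
    simp only [← mul_div_assoc, ← add_div]
    gcongr
    exact fiberEntropy_smul_add_smul_le hab μ₁ μ₂ (measurable_itinerary h₁.measurable hg n)
  · simp only [← mul_div_assoc, ← add_div]
    gcongr
    exact le_fiberEntropy_smul_add_smul hab μ₁ μ₂ _

end Itinerary

section KolmogorovSinai

variable {X : Type*} [MeasurableSpace X] {f : X → X} {μ : Measure X}

lemma IsFinPartition.exists_labelling {s : Finset (Set X)} (hs : IsFinPartition s) :
    ∃ g : X → Fin s.card, Measurable g ∧ ∀ A : {A // A ∈ s}, g ⁻¹' {s.equivFin A} = A := by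
  obtain ⟨hmeas, hcover, hdisj⟩ := hs
  have exists_cell (x : X) : ∃ A : {A // A ∈ s}, x ∈ A.1 := by
    obtain ⟨A, hA, hxA⟩ := mem_sUnion.1 (hcover ▸ mem_univ x)
    exact ⟨⟨A, hA⟩, hxA⟩
  choose cell mem_cell using exists_cell
  have cell_eq {x : X} {A : {A // A ∈ s}} : cell x = A ↔ x ∈ A.1 := by
    refine ⟨fun h ↦ h ▸ mem_cell x, fun hx ↦ Subtype.ext ?_⟩
    exact PairwiseDisjoint.elim_set (f := id) hdisj (cell x).2 A.2 x (mem_cell x) hx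
  have preimage_cell (A : {A // A ∈ s}) : (s.equivFin ∘ cell) ⁻¹' {s.equivFin A} = A := by
    ext x
    simp [cell_eq]
  refine ⟨s.equivFin ∘ cell, measurable_to_countable' fun i ↦ ?_, preimage_cell⟩
  rw [← s.equivFin.apply_symm_apply i, preimage_cell]
  exact hmeas _ (s.equivFin.symm i).2

lemma dynH_eq_fiberEntropy_itinerary {ι : Type*} [Fintype ι] {s : Finset (Set X)}
    (e : {A // A ∈ s} ≃ ι) {g : X → ι} (hg : ∀ A, g ⁻¹' {e A} = A) (f : X → X) (μ : Measure X)
    (n : ℕ) : dynH f μ s n = fiberEntropy μ (itinerary f g n) := by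
  classical
  have cylinder_eq (w : Fin n → {A // A ∈ s}) :
      ⋂ i : Fin n, f^[i] ⁻¹' (w i).1 = itinerary f g n ⁻¹' {e ∘ w} := by
    ext x
    simp [← hg, itinerary, funext_iff]
  rw [dynH, fiberEntropy, ← Finset.sum_neg_distrib]
  refine Fintype.sum_equiv ((Equiv.refl _).arrowCongr e) _ _ fun w ↦ ?_
  rw [cylinder_eq, Real.negMulLog, neg_mul]
  rfl

lemma isFinPartition_fibers [DecidableEq (Set X)] {S : Type*} [Fintype S] [MeasurableSpace S]
    [MeasurableSingletonClass S] {g : X → S} (hg : Measurable g) :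
    IsFinPartition (Finset.univ.image fun a ↦ g ⁻¹' {a}) := by
  refine ⟨?_, ?_, ?_⟩
  · simp only [Finset.mem_image, Finset.mem_univ, true_and, forall_exists_index,
      forall_apply_eq_imp_iff]
    exact fun a ↦ hg (measurableSet_singleton a)
  · ext x
    simp
  · rintro _ hA _ hB hne
    simp only [Finset.coe_image, Finset.coe_univ, image_univ, mem_range] at hA hB
    obtain ⟨a, rfl⟩ := hA
    obtain ⟨b, rfl⟩ := hB
    have hab : a ≠ b := by
      rintro rfl
      exact hne rfl
    exact (disjoint_singleton.2 hab).preimage g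

variable [IsProbabilityMeasure μ]

lemma liminf_dynH_eq_entropyRate (hf : MeasurePreserving f μ μ) {s : Finset (Set X)} {ι : Type*}
    [Fintype ι] [MeasurableSpace ι] [MeasurableSingletonClass ι] (e : {A // A ∈ s} ≃ ι) {g : X → ι}
    (hgm : Measurable g) (hg : ∀ A, g ⁻¹' {e A} = A) :
    atTop.liminf (fun n : ℕ ↦ ((dynH f μ s n / n : ℝ) : EReal)) = entropyRate f μ g := by
  simp only [dynH_eq_fiberEntropy_itinerary e hg]
  exact ((continuous_coe_real_ereal.tendsto _).comp (tendsto_entropyRate hf hgm)).liminf_eq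

lemma entropyRate_le_ksEntropy (hf : MeasurePreserving f μ μ) {S : Type*} [Fintype S]
    [MeasurableSpace S] [MeasurableSingletonClass S] {g : X → S} (hg : Measurable g) :
    (entropyRate f μ g : EReal) ≤ ksEntropy f μ := by
  classical
  have hpart := isFinPartition_fibers hg
  obtain ⟨g', hg'm, hg'⟩ := hpart.exists_labelling
  have : Nonempty S := (nonempty_of_isProbabilityMeasure μ).map g
  have hfactors : g.FactorsThrough g' := by
    intro x y hxy
    have hx := hg' ⟨g ⁻¹' {g y}, Finset.mem_image_of_mem _ (Finset.mem_univ _)⟩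
    have hy : g' y = _ := hx.ge (mem_singleton (g y))
    exact hx.le (hxy.trans hy)
  obtain ⟨π, hπ⟩ := (Function.factorsThrough_iff g).1 hfactors
  calc (entropyRate f μ g : EReal) = entropyRate f μ (π ∘ g') := by rw [← hπ]
    _ ≤ entropyRate f μ g' := EReal.coe_le_coe_iff.2 (entropyRate_comp_le hf hg'm π)
    _ ≤ ksEntropy f μ := by
        rw [← liminf_dynH_eq_entropyRate hf _ hg'm hg']
        exact le_iSup₂_of_le _ hpart le_rfl

lemma ksEntropy_le_iff (hf : MeasurePreserving f μ μ) {h : EReal} :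
    ksEntropy f μ ≤ h ↔
      ∀ (k : ℕ) (g : X → Fin k), Measurable g → (entropyRate f μ g : EReal) ≤ h := by
  refine ⟨fun hle k g hg ↦ (entropyRate_le_ksEntropy hf hg).trans hle, fun hle ↦ ?_⟩
  refine iSup₂_le fun s hs ↦ ?_
  obtain ⟨g, hgm, hg⟩ := hs.exists_labelling
  rw [liminf_dynH_eq_entropyRate hf _ hgm hg]
  exact hle _ g hgm

lemma ksEntropy_eq_coe_iSup (hf : MeasurePreserving f μ μ) :
    ksEntropy f μ =
      ((⨆ p : Σ k, {g : X → Fin k // Measurable g}, ENNReal.ofReal (entropyRate f μ p.2.1) :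
        ℝ≥0∞) : EReal) := by
  have : Nonempty (Σ k, {g : X → Fin k // Measurable g}) := ⟨1, fun _ ↦ 0, measurable_const⟩
  rw [Monotone.map_ciSup_of_continuousAt continuous_coe_ennreal_ereal.continuousAt
    (fun _ _ ↦ EReal.coe_ennreal_le_coe_ennreal_iff.2)]
  simp only [EReal.coe_ennreal_ofReal, max_eq_left (entropyRate_nonneg f μ _)]
  refine eq_of_forall_ge_iff fun h ↦ ?_
  simp only [ksEntropy_le_iff hf, iSup_le_iff, Sigma.forall, Subtype.forall]

lemma ksEntropy_nonneg (hf : MeasurePreserving f μ μ) : 0 ≤ ksEntropy f μ :=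
  ksEntropy_eq_coe_iSup hf ▸ EReal.coe_ennreal_nonneg _

lemma exists_common_refinement {k l : ℕ} {g : X → Fin k} {h : X → Fin l} (hg : Measurable g)
    (hh : Measurable h) :
    ∃ (m : ℕ) (r : X → Fin m), Measurable r ∧ (∃ π, π ∘ r = g) ∧ ∃ π, π ∘ r = h := by
  refine ⟨k * l, finProdFinEquiv ∘ fun x ↦ (g x, h x), Measurable.of_discrete.comp (hg.prodMk hh),
    ⟨Prod.fst ∘ finProdFinEquiv.symm, ?_⟩, ⟨Prod.snd ∘ finProdFinEquiv.symm, ?_⟩⟩ <;>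
  · ext x
    simp

lemma ksEntropy_smul_add_smul {μ₁ μ₂ : Measure X} [IsProbabilityMeasure μ₁]
    [IsProbabilityMeasure μ₂] {a b : ℝ≥0∞} (hab : a + b = 1) (h₁ : MeasurePreserving f μ₁ μ₁)
    (h₂ : MeasurePreserving f μ₂ μ₂) :
    ksEntropy f (a • μ₁ + b • μ₂) = a * ksEntropy f μ₁ + b * ksEntropy f μ₂ := by
  obtain ⟨ha, hb⟩ := ne_top_of_add_eq_one hab
  have := isProbabilityMeasure_smul_add_smul hab μ₁ μ₂
  rw [ksEntropy_eq_coe_iSup (measurePreserving_smul_add_smul a b h₁ h₂), ksEntropy_eq_coe_iSup h₁,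
    ksEntropy_eq_coe_iSup h₂, ← EReal.coe_ennreal_mul, ← EReal.coe_ennreal_mul,
    ← EReal.coe_ennreal_add, ENNReal.mul_iSup, ENNReal.mul_iSup, ENNReal.iSup_add_iSup]
  · refine congrArg _ (iSup_congr fun ⟨k, g, hg⟩ ↦ ?_)
    dsimp only
    rw [entropyRate_smul_add_smul hab h₁ h₂ hg, ENNReal.ofReal_add, ENNReal.ofReal_mul,
      ENNReal.ofReal_mul, ENNReal.ofReal_toReal ha, ENNReal.ofReal_toReal hb]
    all_goals have := entropyRate_nonneg f μ₁ g; have := entropyRate_nonneg f μ₂ g; positivity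
  · rintro ⟨k, g, hg⟩ ⟨l, h, hh⟩
    obtain ⟨m, r, hr, ⟨π, rfl⟩, ⟨π', rfl⟩⟩ := exists_common_refinement hg hh
    refine ⟨⟨m, r, hr⟩, ?_⟩
    gcongr
    · exact entropyRate_comp_le h₁ hr π
    · exact entropyRate_comp_le h₂ hr π'

lemma mul_add_mul_lt_of_lt {a b x y : ℝ≥0∞} (hab : a + b = 1) (hb : b ≠ 0) (hx : x ≠ ∞)
    (hyx : y < x) : a * x + b * y < x := by
  obtain ⟨ha, hb'⟩ := ne_top_of_add_eq_one hab
  calc a * x + b * y < a * x + b * x :=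
        ENNReal.add_lt_add_left (ENNReal.mul_ne_top ha hx) (ENNReal.mul_lt_mul_right hb hb' hyx)
    _ = x := by rw [← add_mul, hab, one_mul]

lemma ksEntropy_smul_add_smul_lt {μ₁ μ₂ : Measure X} [IsProbabilityMeasure μ₁]
    [IsProbabilityMeasure μ₂] {a b : ℝ≥0∞} (hab : a + b = 1) (hb : b ≠ 0)
    (h₁ : MeasurePreserving f μ₁ μ₁) (h₂ : MeasurePreserving f μ₂ μ₂)
    (hfin : ksEntropy f μ₁ ≠ ⊤) (hlt : ksEntropy f μ₂ < ksEntropy f μ₁) :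
    ksEntropy f (a • μ₁ + b • μ₂) < ksEntropy f μ₁ := by
  rw [ksEntropy_smul_add_smul hab h₁ h₂]
  rw [ksEntropy_eq_coe_iSup h₁] at hfin hlt ⊢
  rw [ksEntropy_eq_coe_iSup h₂] at hlt ⊢
  exact_mod_cast mul_add_mul_lt_of_lt hab hb (by simpa using hfin) (by exact_mod_cast hlt)

end KolmogorovSinai

section BirkhoffSum

variable {X : Type*} [MeasurableSpace X] {μ : Measure X} {f : X → X} {C : X → ℝ}

lemma integrable_birkhoffSum (hf : MeasurePreserving f μ μ) (hC : Integrable C μ) (n : ℕ) :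
    Integrable (birkhoffSum f C n) μ :=
  integrable_finsetSum _ fun i _ ↦ (hf.iterate i).integrable_comp_of_integrable hC

lemma integral_birkhoffSum (hf : MeasurePreserving f μ μ) (hC : Integrable C μ) (n : ℕ) :
    ∫ x, birkhoffSum f C n x ∂μ = n * ∫ x, C x ∂μ := by
  have integrable_iterate (i : ℕ) : Integrable (fun x ↦ C (f^[i] x)) μ :=
    (hf.iterate i).integrable_comp_of_integrable hC
  have integral_iterate (i : ℕ) : ∫ x, C (f^[i] x) ∂μ = ∫ x, C x ∂μ := by
    have hi := hf.iterate i
    rw [← integral_map hi.aemeasurable (hi.map_eq.symm ▸ hC.aestronglyMeasurable), hi.map_eq]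
  simp only [birkhoffSum]
  rw [integral_finsetSum _ fun i _ ↦ integrable_iterate i]
  simp [integral_iterate]

end BirkhoffSum

lemma sum_fin_succ_arrow {S : Type*} [Fintype S] (n : ℕ) (F : S → (Fin n → S) → ℝ) :
    ∑ w : Fin (n + 1) → S, F (w 0) (Fin.tail w) = ∑ a, ∑ w, F a w := by
  rw [← Fintype.sum_prod_type']
  exact (Fintype.sum_equiv (Fin.consEquiv fun _ ↦ S) _ _ fun _ ↦ by simp [Fin.consEquiv]).symm

/-- The list `l` agrees with the labels under `g` of `x, f x, f² x, …`, except possibly at times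
when the orbit lies outside of `G`. -/
def Predicts {X S : Type*} (f : X → X) (g : X → S) (G : Set X) : List S → X → Prop
  | [], _ => True
  | a :: l, x => (x ∈ G → a = g x) ∧ Predicts f g G l (f x)

/-- A randomized code for sequences over `S`: a block `head j :: tail j` is picked with probability
`weight j`, its letters are emitted one by one through the memoryless noisy `channel`, and then the
next block is picked. All distributions are allowed to have total mass less than one. -/
structure BlockCode (S J : Type*) [Fintype S] [Fintype J] where
  channel : S → S → ℝ
  weight : J → ℝ
  head : J → S
  tail : J → List S
  channel_nonneg : ∀ a b, 0 ≤ channel a b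
  sum_channel_le_one : ∀ a, ∑ b, channel a b ≤ 1
  weight_nonneg : ∀ j, 0 ≤ weight j
  sum_weight_le_one : ∑ j, weight j ≤ 1

namespace BlockCode

variable {S J : Type*} [Fintype S] [Fintype J]

/-- The probability that the code emits the word `w`, given that the letters of the list are still
to be sent before a new block is picked. -/
def likelihood (c : BlockCode S J) : (n : ℕ) → List S → (Fin n → S) → ℝ
  | 0, _, _ => 1
  | n + 1, a :: l, w => c.channel a (w 0) * c.likelihood n l (Fin.tail w)
  | n + 1, [], w =>
    ∑ j, c.weight j * (c.channel (c.head j) (w 0) * c.likelihood n (c.tail j) (Fin.tail w))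

lemma likelihood_nonneg (c : BlockCode S J) :
    ∀ (n : ℕ) (l : List S) (w : Fin n → S), 0 ≤ c.likelihood n l w
  | 0, _, _ => zero_le_one
  | n + 1, _ :: l, _ => mul_nonneg (c.channel_nonneg _ _) (c.likelihood_nonneg n l _)
  | n + 1, [], _ => Finset.sum_nonneg fun j _ ↦
      mul_nonneg (c.weight_nonneg j) (mul_nonneg (c.channel_nonneg _ _) (c.likelihood_nonneg n _ _))

lemma sum_likelihood_le_one (c : BlockCode S J) (n : ℕ) (l : List S) :
    ∑ w, c.likelihood n l w ≤ 1 := by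
  induction n generalizing l with
  | zero => simp [likelihood]
  | succ n ih =>
    have sum_letter_le_one (a : S) (l : List S) :
        ∑ w : Fin (n + 1) → S, c.channel a (w 0) * c.likelihood n l (Fin.tail w) ≤ 1 := by
      rw [sum_fin_succ_arrow n fun b w ↦ c.channel a b * c.likelihood n l w, ← Finset.sum_mul_sum]
      exact mul_le_one₀ (c.sum_channel_le_one a)
        (Finset.sum_nonneg fun w _ ↦ c.likelihood_nonneg n l w) (ih l)
    cases l with
    | cons a l => exact sum_letter_le_one a l
    | nil =>
      simp only [likelihood]
      rw [Finset.sum_comm]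
      simp only [← Finset.mul_sum]
      refine le_trans (Finset.sum_le_sum fun j _ ↦ ?_) c.sum_weight_le_one
      exact mul_le_of_le_one_right (c.weight_nonneg j) (sum_letter_le_one _ _)

/-- The maximal number of letters of a block after its first one. -/
def maxTail (c : BlockCode S J) : ℕ :=
  Finset.univ.sup fun j ↦ (c.tail j).length

lemma length_tail_le_maxTail (c : BlockCode S J) (j : J) : (c.tail j).length ≤ c.maxTail :=
  Finset.le_sup (f := fun j ↦ (c.tail j).length) (Finset.mem_univ j)

lemma mul_likelihood_le_likelihood_nil (c : BlockCode S J) (j : J) (n : ℕ) (w : Fin (n + 1) → S) :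
    c.weight j * c.channel (c.head j) (w 0) * c.likelihood n (c.tail j) (Fin.tail w) ≤
      c.likelihood (n + 1) [] w := by
  rw [mul_assoc]
  exact Finset.single_le_sum
    (f := fun j ↦ c.weight j * (c.channel (c.head j) (w 0) *
      c.likelihood n (c.tail j) (Fin.tail w)))
    (fun j _ ↦ mul_nonneg (c.weight_nonneg j)
      (mul_nonneg (c.channel_nonneg _ _) (c.likelihood_nonneg _ _ _)))
    (Finset.mem_univ j)

variable {X : Type*} {f : X → X} {g : X → S} {G : Set X} {C : X → ℝ} {α : ℝ} {c : BlockCode S J}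

lemma exp_le_likelihood_itinerary (hα : 0 ≤ α)
    (hchannel : ∀ a x, (x ∈ G → a = g x) → Real.exp (-C x) ≤ c.channel a (g x))
    (hblock : ∀ x, ∃ j, Predicts f g G (c.tail j) (f x) ∧
      Real.exp (-C x - α * ((c.tail j).length + 1)) ≤ c.weight j * c.channel (c.head j) (g x))
    (n : ℕ) (l : List S) (x : X) (hl : l.length ≤ c.maxTail)
    (hpred : Predicts f g G l x) :
    Real.exp (-birkhoffSum f C n x - α * (n - l.length + c.maxTail)) ≤
      c.likelihood n l (itinerary f g n x) := by
  induction n generalizing l x with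
  | zero =>
    have hlen : (l.length : ℝ) ≤ c.maxTail := by exact_mod_cast hl
    refine Real.exp_le_one_iff.2 ?_
    simp only [birkhoffSum_zero, Nat.cast_zero]
    linarith [mul_nonneg hα (sub_nonneg.2 hlen)]
  | succ n ih =>
    cases l with
    | cons a l =>
      have hl' : l.length ≤ c.maxTail := (Nat.le_succ _).trans hl
      calc _ = Real.exp (-C x) *
            Real.exp (-birkhoffSum f C n (f x) - α * (n - l.length + c.maxTail)) := by
            rw [← Real.exp_add, birkhoffSum_succ']
            push_cast [List.length_cons]
            ring_nf
        _ ≤ c.channel a (g x) * c.likelihood n l (itinerary f g n (f x)) :=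
            mul_le_mul (hchannel a x hpred.1) (ih l (f x) hl' hpred.2) (Real.exp_pos _).le
              (c.channel_nonneg _ _)
    | nil =>
      obtain ⟨j, hpred', hj⟩ := hblock x
      calc _ = Real.exp (-C x - α * ((c.tail j).length + 1)) *
            Real.exp (-birkhoffSum f C n (f x) - α * (n - (c.tail j).length + c.maxTail)) := by
            rw [← Real.exp_add, birkhoffSum_succ']
            push_cast [List.length_nil]
            ring_nf
        _ ≤ c.weight j * c.channel (c.head j) (g x) *
              c.likelihood n (c.tail j) (itinerary f g n (f x)) :=
            mul_le_mul hj (ih _ _ (c.length_tail_le_maxTail j) hpred') (Real.exp_pos _).le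
              (mul_nonneg (c.weight_nonneg j) (c.channel_nonneg _ _))
        _ ≤ c.likelihood (n + 1) [] (itinerary f g (n + 1) x) :=
            c.mul_likelihood_le_likelihood_nil j n (itinerary f g (n + 1) x)

lemma entropyRate_le [MeasurableSpace X] [MeasurableSpace S]
    [MeasurableSingletonClass S] {μ : Measure X} [IsProbabilityMeasure μ]
    (hf : MeasurePreserving f μ μ) (hg : Measurable g) (hC : Integrable C μ) (hα : 0 ≤ α)
    (hchannel : ∀ a x, (x ∈ G → a = g x) → Real.exp (-C x) ≤ c.channel a (g x))
    (hblock : ∀ x, ∃ j, Predicts f g G (c.tail j) (f x) ∧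
      Real.exp (-C x - α * ((c.tail j).length + 1)) ≤ c.weight j * c.channel (c.head j) (g x)) :
    entropyRate f μ g ≤ α + ∫ x, C x ∂μ := by
  have fiberEntropy_le (n : ℕ) :
      fiberEntropy μ (itinerary f g n) ≤ n * ∫ x, C x ∂μ + α * (n + c.maxTail) := by
    have hsum := integrable_birkhoffSum hf hC n
    calc fiberEntropy μ (itinerary f g n)
        ≤ ∫ x, birkhoffSum f C n x + α * (n + c.maxTail) ∂μ := by
          refine fiberEntropy_le_integral μ (measurable_itinerary hf.measurable hg n)
            (c.likelihood_nonneg n []) (c.sum_likelihood_le_one n [])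
            (hsum.add (integrable_const _)) (.of_forall fun x ↦ ?_)
          refine le_trans (le_of_eq ?_) (exp_le_likelihood_itinerary hα hchannel hblock n [] x
            (Nat.zero_le _) trivial)
          simp [sub_eq_add_neg, add_comm]
      _ = n * ∫ x, C x ∂μ + α * (n + c.maxTail) := by
          rw [integral_add hsum (integrable_const _), integral_birkhoffSum hf hC]
          simp
  have hlim := (tendsto_const_div_atTop_nhds_zero_nat (α * c.maxTail)).const_add
    (α + ∫ x, C x ∂μ)
  rw [add_zero] at hlim
  refine le_of_tendsto_of_tendsto (tendsto_entropyRate hf hg) hlim ?_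
  filter_upwards [eventually_gt_atTop 0] with n hn
  rw [div_le_iff₀ (by exact_mod_cast hn)]
  refine (fiberEntropy_le n).trans_eq ?_
  field_simp
  ring

end BlockCode

section DefectCost

variable {X : Type*} {G K : Set X} {η C : ℝ}

/-- A bound for the number of nats lost at `x` when coding an orbit: a base price `η`, and a
penalty `C` for each of the exceptional sets `Gᶜ` and `Kᶜ` containing `x`. -/
noncomputable def defectCost (G K : Set X) (η C : ℝ) (x : X) : ℝ :=
  η + (Gᶜ.indicator (fun _ ↦ C) x + Kᶜ.indicator (fun _ ↦ C) x)

lemma le_defectCost (hC : 0 ≤ C) (x : X) : η ≤ defectCost G K η C x :=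
  le_add_of_nonneg_right
    (add_nonneg (indicator_nonneg (fun _ _ ↦ hC) x) (indicator_nonneg (fun _ _ ↦ hC) x))

lemma le_defectCost_of_notMem (hη : 0 ≤ η) (hC : 0 ≤ C) {x : X} (hx : x ∉ G ∨ x ∉ K) :
    C ≤ defectCost G K η C x := by
  have hG : 0 ≤ Gᶜ.indicator (fun _ ↦ C) x := indicator_nonneg (fun _ _ ↦ hC) x
  have hK : 0 ≤ Kᶜ.indicator (fun _ ↦ C) x := indicator_nonneg (fun _ _ ↦ hC) x
  rw [defectCost]
  rcases hx with hx | hx <;> rw [← mem_compl_iff] at hx <;>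
    linarith [indicator_of_mem hx fun _ ↦ C]

variable [MeasurableSpace X] {μ : Measure X}

lemma integrable_indicator_add_indicator [IsFiniteMeasure μ] (hG : MeasurableSet G)
    (hK : MeasurableSet K) :
    Integrable (fun x ↦ Gᶜ.indicator (fun _ ↦ C) x + Kᶜ.indicator (fun _ ↦ C) x) μ :=
  ((integrable_const C).indicator hG.compl).add ((integrable_const C).indicator hK.compl)

lemma integrable_defectCost [IsFiniteMeasure μ] (hG : MeasurableSet G) (hK : MeasurableSet K) :
    Integrable (defectCost G K η C) μ :=
  (integrable_const η).add (integrable_indicator_add_indicator hG hK)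

lemma integral_defectCost [IsProbabilityMeasure μ] (hG : MeasurableSet G) (hK : MeasurableSet K) :
    ∫ x, defectCost G K η C x ∂μ = η + C * (μ.real Gᶜ + μ.real Kᶜ) := by
  simp only [defectCost]
  rw [integral_add (integrable_const η) (integrable_indicator_add_indicator hG hK),
    integral_add ((integrable_const C).indicator hG.compl)
      ((integrable_const C).indicator hK.compl),
    integral_indicator_const _ hG.compl, integral_indicator_const _ hK.compl]
  simp only [integral_const, probReal_univ, smul_eq_mul]
  ring

end DefectCost

lemma BlockCode.entropyRate_le_of_predicts_on {X S J : Type*} [Fintype S] [Fintype J]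
    [MeasurableSpace X] [MeasurableSpace S] [MeasurableSingletonClass S] (c : BlockCode S J)
    {μ : Measure X} [IsProbabilityMeasure μ] {f : X → X} {g : X → S} (hf : MeasurePreserving f μ μ)
    (hg : Measurable g) {G K : Set X} (hG : MeasurableSet G) (hK : MeasurableSet K)
    {α η C : ℝ} (hα : 0 ≤ α) (hη : 0 ≤ η) (hC : 0 ≤ C)
    (hnoise : ∀ a b, Real.exp (-C) ≤ c.channel a b)
    (hdiag : ∀ a, Real.exp (-η) ≤ c.channel a a)
    (hblock : ∀ x ∈ K, ∃ j, Predicts f g G (c.head j :: c.tail j) x ∧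
      Real.exp (-α * ((c.tail j).length + 1)) ≤ c.weight j)
    (hletter : ∃ j, c.tail j = [] ∧ ∀ b, Real.exp (-C) ≤ c.weight j * c.channel (c.head j) b) :
    entropyRate f μ g ≤ α + (η + C * (μ.real Gᶜ + μ.real Kᶜ)) := by
  have hchannel (a : S) (x : X) (ha : x ∈ G → a = g x) :
      Real.exp (-defectCost G K η C x) ≤ c.channel a (g x) := by
    by_cases hx : x ∈ G
    · rw [ha hx]
      exact (Real.exp_le_exp.2 (neg_le_neg (le_defectCost hC x))).trans (hdiag _)
    · exact (Real.exp_le_exp.2 (neg_le_neg (le_defectCost_of_notMem hη hC (.inl hx)))).trans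
        (hnoise _ _)
  refine (c.entropyRate_le hf hg (integrable_defectCost hG hK) hα hchannel
    fun x ↦ ?_).trans_eq (congrArg _ (integral_defectCost hG hK))
  by_cases hx : x ∈ K
  · obtain ⟨j, ⟨hhead, htail⟩, hj⟩ := hblock x hx
    refine ⟨j, htail, le_trans (le_of_eq ?_) (mul_le_mul hj (hchannel _ x hhead)
      (Real.exp_pos _).le (c.weight_nonneg j))⟩
    rw [← Real.exp_add]
    ring_nf
  · obtain ⟨j, htail, hj⟩ := hletter
    refine ⟨j, htail ▸ trivial, le_trans (Real.exp_le_exp.2 ?_) (hj (g x))⟩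
    have hα_len : 0 ≤ α * ((c.tail j).length + 1) := by positivity
    linarith [le_defectCost_of_notMem hη hC (.inr hx) (G := G)]

section LowerBound

lemma exists_noisyChannel (S : Type*) [Fintype S] [Nonempty S] {η : ℝ} (hη : 0 < η) :
    ∃ (e : S → S → ℝ) (c : ℝ), 0 < c ∧ (∀ a b, Real.exp (-c) ≤ 1 / 2 * e a b) ∧
      (∀ a, ∑ b, e a b ≤ 1) ∧ ∀ a, Real.exp (-η) ≤ e a a := by
  classical
  set k : ℝ := ((Fintype.card S : ℕ) : ℝ)
  set β : ℝ := 1 - Real.exp (-η) with hβ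
  have hk : 1 ≤ k := Nat.one_le_cast.2 Fintype.card_pos
  have hβ_pos : 0 < β := sub_pos.2 (Real.exp_lt_one_iff.2 (neg_lt_zero.2 hη))
  have hβ_le : β ≤ 1 := sub_le_self _ (Real.exp_pos _).le
  have noise_pos : 0 < β / k := by positivity
  have noise_le : β / k ≤ 1 := div_le_one_of_le₀ (hβ_le.trans hk) (by positivity)
  refine ⟨fun a b ↦ (1 - β) * (if a = b then 1 else 0) + β / k, -Real.log (β / k / 2),
    neg_pos.2 (Real.log_neg (by positivity) (by linarith)), fun a b ↦ ?_, fun a ↦ ?_, fun a ↦ ?_⟩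
  · rw [neg_neg, Real.exp_log (by positivity)]
    dsimp only
    split_ifs <;> linarith
  · rw [Finset.sum_add_distrib, ← Finset.mul_sum, Fintype.sum_ite_eq, Finset.sum_const,
      Finset.card_univ, nsmul_eq_mul, mul_div_cancel₀ _ (by positivity)]
    linarith
  · simp only [if_true, hβ]
    linarith

lemma exists_label_of_isClosed {X S : Type*} [MetricSpace X] [CompactSpace X] [Finite S]
    [Nonempty S] {F : S → Set X} (hF : ∀ a, IsClosed (F a))
    (hdisj : Pairwise (Function.onFun Disjoint F)) :
    ∃ ε > 0, ∃ σ : X → S, ∀ x, ∀ a, ∀ y ∈ F a, dist x y < ε → σ x = a := by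
  have cover : univ ⊆ ⋃ a, (⋃ b : {b // b ≠ a}, F b.1)ᶜ := by
    intro x _
    by_cases hx : ∃ a, x ∈ F a
    · obtain ⟨a, ha⟩ := hx
      refine mem_iUnion.2 ⟨a, fun hxb ↦ ?_⟩
      obtain ⟨⟨b, hb⟩, hxb⟩ := mem_iUnion.1 hxb
      exact disjoint_left.1 (hdisj hb) hxb ha
    · refine mem_iUnion.2 ⟨Classical.arbitrary S, fun hxb ↦ hx ?_⟩
      obtain ⟨b, hxb⟩ := mem_iUnion.1 hxb
      exact ⟨b, hxb⟩
  obtain ⟨ε, hε, hball⟩ := lebesgue_number_lemma_of_metric isCompact_univ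
    (fun a ↦ (isClosed_iUnion_of_finite fun b : {b // b ≠ a} ↦ hF b.1).isOpen_compl) cover
  choose σ hσ using fun x ↦ hball x (mem_univ x)
  refine ⟨ε, hε, σ, fun x a y hy hxy ↦ by_contra fun hne ↦ ?_⟩
  exact hσ x (Metric.mem_ball'.2 hxy) (mem_iUnion.2 ⟨⟨a, Ne.symm hne⟩, hy⟩)

lemma exists_measurableSet_locally_constant {X S : Type*} [MetricSpace X] [CompactSpace X]
    [MeasurableSpace X] [BorelSpace X] [Finite S] [Nonempty S] [MeasurableSpace S]
    [MeasurableSingletonClass S] (μ : Measure X) [IsFiniteMeasure μ] {g : X → S}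
    (hg : Measurable g) {δ : ℝ} (hδ : 0 < δ) :
    ∃ G, MeasurableSet G ∧ μ.real Gᶜ ≤ δ ∧
      ∃ ε > 0, ∃ σ : X → S, ∀ x, ∀ y ∈ G, dist x y < ε → σ x = g y := by
  have := Fintype.ofFinite S
  have hδ' : 0 < δ / Fintype.card S := by positivity
  have exists_closed (a : S) := (hg (measurableSet_singleton a)).exists_isClosed_sdiff_lt
    (measure_ne_top μ _) (ENNReal.ofReal_pos.2 hδ').ne'
  choose F hF hF_closed hF_meas using exists_closed
  have mem_F {a : S} {y : X} (hy : y ∈ F a) : g y = a := hF a hy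
  refine ⟨⋃ a, F a, .iUnion fun a ↦ (hF_closed a).measurableSet, ?_, ?_⟩
  · calc μ.real (⋃ a, F a)ᶜ ≤ μ.real (⋃ a, (g ⁻¹' {a} \ F a)) := by
          refine measureReal_mono fun x hx ↦ mem_iUnion.2 ⟨g x, rfl, fun h ↦ hx ?_⟩
          exact mem_iUnion.2 ⟨g x, h⟩
      _ ≤ ∑ a, μ.real (g ⁻¹' {a} \ F a) := measureReal_iUnion_fintype_le _
      _ ≤ ∑ _a : S, δ / Fintype.card S :=
          Finset.sum_le_sum fun a _ ↦ ENNReal.toReal_le_of_le_ofReal hδ'.le (hF_meas a).le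
      _ = δ := by
          rw [Finset.sum_const, Finset.card_univ, nsmul_eq_mul,
            mul_div_cancel₀ _ (by positivity)]
  · obtain ⟨ε, hε, σ, hσ⟩ := exists_label_of_isClosed hF_closed fun a b hab ↦
      disjoint_left.2 fun x ha hb ↦ hab ((mem_F ha).symm.trans (mem_F hb))
    refine ⟨ε, hε, σ, fun x y hy hxy ↦ ?_⟩
    obtain ⟨a, ha⟩ := mem_iUnion.1 hy
    exact (hσ x a y ha hxy).trans (mem_F ha).symm

lemma birk_zero {X : Type*} (f : X → X) (n : ℕ) (x : X) : birk f (fun _ ↦ 0) n x = 0 :=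
  Finset.sum_const_zero

variable {X : Type*} [MetricSpace X]

lemma mem_bowenBall_succ {f : X → X} {x y : X} {n : ℕ} {ε : ℝ} :
    y ∈ bowenBall f x (n + 1) ε ↔ dist x y < ε ∧ f y ∈ bowenBall f (f x) n ε := by
  simp only [bowenBall, mem_ofPred_eq, Nat.forall_lt_succ_left, Function.iterate_succ_apply,
    Function.iterate_zero_apply]

lemma measurableSet_bowenBall [MeasurableSpace X] [OpensMeasurableSpace X] {f : X → X}
    (hf : Measurable f) (x : X) (n : ℕ) (ε : ℝ) : MeasurableSet (bowenBall f x n ε) := by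
  have : bowenBall f x n ε = ⋂ i ∈ Finset.range n, f^[i] ⁻¹' Metric.ball (f^[i] x) ε := by
    ext y
    simp [bowenBall, dist_comm]
  rw [this]
  exact Finset.measurableSet_biInter _ fun i _ ↦ hf.iterate i measurableSet_ball

lemma predicts_of_mem_bowenBall {S : Type*} {f : X → X} {g : X → S} {G : Set X} {σ : X → S}
    {ε : ℝ} (hσ : ∀ x, ∀ y ∈ G, dist x y < ε → σ x = g y) {n : ℕ} {x y : X}
    (hy : y ∈ bowenBall f x n ε) : Predicts f g G ((List.iterate f x n).map σ) y := by
  induction n generalizing x y with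
  | zero => trivial
  | succ n ih =>
    obtain ⟨hxy, hfy⟩ := mem_bowenBall_succ.1 hy
    exact ⟨fun hG ↦ hσ x y hG hxy, ih hfy⟩

lemma exists_finset_measureReal_compl_biUnion_le {X ι : Type*} [MeasurableSpace X] [Countable ι]
    (μ : Measure X) [IsProbabilityMeasure μ] {B : ι → Set X} (hB : ∀ i, MeasurableSet (B i))
    (hμ : μ (⋃ i, B i) = 1) {δ : ℝ} (hδ : 0 < δ) :
    ∃ t : Finset ι, μ.real (⋃ i ∈ t, B i)ᶜ ≤ δ := by
  have hmono : Monotone fun t : Finset ι ↦ ⋃ i ∈ t, B i :=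
    fun s t hst ↦ biUnion_subset_biUnion_left hst
  rw [iUnion_eq_iUnion_finset, hmono.directed_le.measure_iUnion] at hμ
  obtain ⟨t, ht⟩ := lt_iSup_iff.1 ((ENNReal.sub_lt_self ENNReal.one_ne_top one_ne_zero
    (ENNReal.ofReal_pos.2 hδ).ne').trans_eq hμ.symm)
  refine ⟨t, ENNReal.toReal_le_of_le_ofReal hδ.le ?_⟩
  rw [prob_compl_eq_one_sub (t.measurableSet_biUnion fun i _ ↦ hB i)]
  exact tsub_le_iff_tsub_le.1 ht.le

lemma Mcov_lt_iff {f : X → X} {φ : X → ℝ} {Z : Set X} {α ε : ℝ} {N : ℕ} {δ : ℝ≥0∞} :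
    Mcov f φ Z α N ε < δ ↔ ∃ c : ℕ → X × ℕ, ((∀ i, N ≤ (c i).2) ∧
      Z ⊆ ⋃ i, bowenBall f (c i).1 (c i).2 ε) ∧
      ∑' i, ENNReal.ofReal (Real.exp (-α * (c i).2 + birk f φ (c i).2 (c i).1)) < δ := by
  simp only [Mcov, iInf_lt_iff, exists_prop]

lemma exists_cover_of_mZ_eq_zero {f : X → X} {Z : Set X} {α ε : ℝ}
    (hZ : mZ f (fun _ ↦ 0) Z α ε = 0) (N : ℕ) {δ : ℝ} (hδ : 0 < δ) :
    ∃ c : ℕ → X × ℕ, (∀ i, N ≤ (c i).2) ∧ Z ⊆ ⋃ i, bowenBall f (c i).1 (c i).2 ε ∧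
      ∀ t : Finset ℕ, ∑ i ∈ t, Real.exp (-α * (c i).2) < δ := by
  have hM : Mcov f (fun _ ↦ 0) Z α N ε < ENNReal.ofReal δ := by
    rw [ENNReal.iSup_eq_zero.1 hZ N]
    exact ENNReal.ofReal_pos.2 hδ
  obtain ⟨c, ⟨hc, hcover⟩, hsum⟩ := Mcov_lt_iff.1 hM
  refine ⟨c, hc, hcover, fun t ↦ (ENNReal.ofReal_lt_ofReal_iff hδ).1 ?_⟩
  rw [ENNReal.ofReal_sum_of_nonneg fun i _ ↦ (Real.exp_pos _).le]
  simp only [birk_zero, add_zero] at hsum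
  exact (ENNReal.sum_le_tsum t).trans_lt hsum

lemma nonneg_of_mZ_eq_zero {f : X → X} {Z : Set X} {α ε : ℝ}
    (hZ : mZ f (fun _ ↦ 0) Z α ε = 0) : 0 ≤ α := by
  obtain ⟨c, -, -, hsum⟩ := exists_cover_of_mZ_eq_zero hZ 0 one_pos
  by_contra! hα
  refine (hsum {0}).not_ge ?_
  rw [Finset.sum_singleton]
  exact Real.one_le_exp (mul_nonneg (neg_nonneg.2 hα.le) (Nat.cast_nonneg _))

variable [MeasurableSpace X] {μ : Measure X} [IsProbabilityMeasure μ] {f : X → X}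

lemma exists_finset_cover_of_mZ_eq_zero [OpensMeasurableSpace X] (hf : Measurable f) {Z : Set X}
    {α ε : ℝ} (hZ : μ Z = 1) (hm : mZ f (fun _ ↦ 0) Z α ε = 0) (N : ℕ) {δ η : ℝ} (hδ : 0 < δ)
    (hη : 0 < η) :
    ∃ t : Finset (X × ℕ), (∀ p ∈ t, N ≤ p.2) ∧ ∑ p ∈ t, Real.exp (-α * p.2) < δ ∧
      μ.real (⋃ p ∈ t, bowenBall f p.1 p.2 ε)ᶜ ≤ η := by
  classical
  obtain ⟨c, hc, hcover, hsum⟩ := exists_cover_of_mZ_eq_zero hm N hδ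
  obtain ⟨s, hs⟩ := exists_finset_measureReal_compl_biUnion_le μ
    (fun i ↦ measurableSet_bowenBall hf (c i).1 (c i).2 ε)
    (le_antisymm prob_le_one (hZ ▸ measure_mono hcover)) hη
  refine ⟨s.image c, by simpa using fun i _ ↦ hc i, lt_of_le_of_lt ?_ (hsum s), ?_⟩
  · exact Finset.sum_image_le_of_nonneg fun _ _ ↦ (Real.exp_pos _).le
  · simpa only [Finset.set_biUnion_finset_image] using hs

lemma exists_entropyRate_le_of_bowenBall [OpensMeasurableSpace X] {S : Type*} [Fintype S]
    [Nonempty S] [MeasurableSpace S] [MeasurableSingletonClass S] (hf : MeasurePreserving f μ μ)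
    {g : X → S} (hg : Measurable g) {η : ℝ} (hη : 0 < η) :
    ∃ C > 0, ∀ (G : Set X) (ε : ℝ) (σ : X → S) (t : Finset (X × ℕ)) (α : ℝ), MeasurableSet G →
      (∀ x, ∀ y ∈ G, dist x y < ε → σ x = g y) → (∀ p ∈ t, 1 ≤ p.2) → 0 ≤ α →
      ∑ p ∈ t, Real.exp (-α * p.2) ≤ 1 / 2 →
      entropyRate f μ g ≤
        α + (η + C * (μ.real Gᶜ + μ.real (⋃ p ∈ t, bowenBall f p.1 p.2 ε)ᶜ)) := by
  obtain ⟨e, C, hC, he, he_sum, he_diag⟩ := exists_noisyChannel S hη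
  refine ⟨C, hC, fun G ε σ t α hG hσ ht hα hsum ↦ ?_⟩
  have hK : MeasurableSet (⋃ p ∈ t, bowenBall f p.1 p.2 ε) :=
    t.measurableSet_biUnion fun p _ ↦ measurableSet_bowenBall hf.measurable p.1 p.2 ε
  let code : BlockCode S (Option t) :=
    { channel := e
      weight := fun j ↦ j.elim (1 / 2) fun p ↦ Real.exp (-α * p.1.2)
      head := fun j ↦ j.elim (Classical.arbitrary S) fun p ↦ σ p.1.1
      tail := fun j ↦ j.elim [] fun p ↦ (List.iterate f (f p.1.1) (p.1.2 - 1)).map σ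
      channel_nonneg := fun a b ↦ by linarith [he a b, Real.exp_pos (-C)]
      sum_channel_le_one := he_sum
      weight_nonneg := by rintro (_ | p) <;> simp [Real.exp_nonneg]
      sum_weight_le_one := by
        rw [Fintype.sum_option]
        simp only [Option.elim]
        rw [t.sum_coe_sort fun p ↦ Real.exp (-α * p.2)]
        linarith }
  refine code.entropyRate_le_of_predicts_on hf hg hG hK hα hη.le hC.le
    (fun a b ↦ by linarith [he a b, Real.exp_pos (-C)]) he_diag (fun x hx ↦ ?_)
    ⟨none, rfl, fun b ↦ he _ b⟩
  obtain ⟨p, hp, hx⟩ := mem_iUnion₂.1 hx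
  obtain ⟨n, hn⟩ := Nat.exists_eq_add_of_le' (ht p hp)
  refine ⟨some ⟨p, hp⟩, ?_, ?_⟩
  · rw [hn] at hx
    simpa [code, hn] using predicts_of_mem_bowenBall hσ hx
  · simp [code, hn]

lemma exists_forall_entropyRate_le [CompactSpace X] [BorelSpace X] {S : Type*} [Fintype S]
    [MeasurableSpace S] [MeasurableSingletonClass S] (hf : MeasurePreserving f μ μ)
    {g : X → S} (hg : Measurable g) {γ : ℝ} (hγ : 0 < γ) :
    ∃ ε > 0, ∀ (Z : Set X) (α : ℝ), μ Z = 1 → mZ f (fun _ ↦ 0) Z α ε = 0 →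
      entropyRate f μ g ≤ α + γ := by
  have : Nonempty S := (nonempty_of_isProbabilityMeasure μ).map g
  obtain ⟨C, hC, hrate⟩ := exists_entropyRate_le_of_bowenBall hf hg (half_pos hγ)
  have hδ : 0 < γ / (4 * C) := by positivity
  obtain ⟨G, hG, hμG, ε, hε, σ, hσ⟩ := exists_measurableSet_locally_constant μ hg hδ
  refine ⟨ε, hε, fun Z α hZ hm ↦ ?_⟩
  obtain ⟨t, ht, hsum, hμt⟩ := exists_finset_cover_of_mZ_eq_zero hf.measurable hZ hm 1
    one_half_pos hδ
  calc entropyRate f μ g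
      ≤ α + (γ / 2 + C * (μ.real Gᶜ + μ.real (⋃ p ∈ t, bowenBall f p.1 p.2 ε)ᶜ)) :=
        hrate G ε σ t α hG hσ ht (nonneg_of_mZ_eq_zero hm) hsum.le
    _ ≤ α + (γ / 2 + C * (γ / (4 * C) + γ / (4 * C))) := by gcongr
    _ = α + γ := by
        field_simp
        ring

lemma ksEntropy_le_Pmu [CompactSpace X] [BorelSpace X] (hf : MeasurePreserving f μ μ) :
    ksEntropy f μ ≤ Pmu f (fun _ ↦ 0) μ := by
  refine (ksEntropy_le_iff hf).2 fun k g hg ↦ EReal.ge_of_forall_gt_iff_ge.1 fun d hd ↦ ?_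
  obtain ⟨ε, hε, hrate⟩ :=
    exists_forall_entropyRate_le hf hg (sub_pos.2 (EReal.coe_lt_coe_iff.1 hd))
  refine le_iSup₂_of_le ε hε (le_iInf₂ fun Z hZ ↦ le_iInf₂ fun α hα ↦ ?_)
  exact EReal.coe_le_coe_iff.2 (by linarith [hrate Z α hZ.2 hα])

end LowerBound

section Cover

variable {X : Type*} [MetricSpace X] {f : X → X} {φ : X → ℝ} {Z Z₁ Z₂ : Set X} {α β ε : ℝ}

lemma Mcov_le_tsum {ι : Type*} [Countable ι] [Infinite ι] {N : ℕ} (c : ι → X × ℕ)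
    (hc : ∀ i, N ≤ (c i).2) (hcover : Z ⊆ ⋃ i, bowenBall f (c i).1 (c i).2 ε) :
    Mcov f φ Z α N ε ≤
      ∑' i, ENNReal.ofReal (Real.exp (-α * (c i).2 + birk f φ (c i).2 (c i).1)) := by
  obtain ⟨e⟩ := nonempty_equiv_of_countable (α := ℕ) (β := ι)
  have hcover' : Z ⊆ ⋃ i, bowenBall f (c (e i)).1 (c (e i)).2 ε := by
    rwa [e.surjective.iUnion_comp fun i ↦ bowenBall f (c i).1 (c i).2 ε]
  refine (iInf₂_le (fun i ↦ c (e i)) ⟨fun i ↦ hc (e i), hcover'⟩).trans_eq ?_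
  exact e.tsum_eq fun i ↦
    ENNReal.ofReal (Real.exp (-α * (c i).2 + birk f φ (c i).2 (c i).1))

lemma Mcov_union_le (f : X → X) (φ : X → ℝ) (Z₁ Z₂ : Set X) (α ε : ℝ) (N : ℕ) :
    Mcov f φ (Z₁ ∪ Z₂) α N ε ≤ Mcov f φ Z₁ α N ε + Mcov f φ Z₂ α N ε := by
  conv_rhs => simp only [Mcov, ENNReal.iInf_add, ENNReal.add_iInf]
  refine le_iInf₂ fun c₂ hc₂ ↦ le_iInf₂ fun c₁ hc₁ ↦ ?_
  refine (Mcov_le_tsum (Sum.elim c₁ c₂) (Sum.forall.2 ⟨hc₁.1, hc₂.1⟩) ?_).trans_eq ?_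
  · simpa only [iUnion_sum, Sum.elim_inl, Sum.elim_inr] using union_subset_union hc₁.2 hc₂.2
  · rw [Summable.tsum_sum ENNReal.summable ENNReal.summable]
    rfl

lemma Mcov_antitone (hαβ : α ≤ β) (N : ℕ) : Mcov f φ Z β N ε ≤ Mcov f φ Z α N ε :=
  iInf₂_mono fun c _ ↦ ENNReal.tsum_le_tsum fun i ↦ by gcongr

lemma mZ_union_eq_zero (h₁ : mZ f φ Z₁ α ε = 0) (h₂ : mZ f φ Z₂ α ε = 0) :
    mZ f φ (Z₁ ∪ Z₂) α ε = 0 := by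
  simp only [mZ, ENNReal.iSup_eq_zero] at *
  intro N
  simpa [h₁ N, h₂ N] using Mcov_union_le f φ Z₁ Z₂ α ε N

lemma mZ_eq_zero_of_le (h : mZ f φ Z α ε = 0) (hαβ : α ≤ β) : mZ f φ Z β ε = 0 :=
  le_bot_iff.1 (h.subst (iSup_mono fun N ↦ Mcov_antitone hαβ N))

lemma PZeps_le_of_mZ_eq_zero (h : mZ f φ Z α ε = 0) : PZeps f φ Z ε ≤ α :=
  iInf₂_le α h

lemma PZeps_union_le (f : X → X) (φ : X → ℝ) (Z₁ Z₂ : Set X) (ε : ℝ) :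
    PZeps f φ (Z₁ ∪ Z₂) ε ≤ max (PZeps f φ Z₁ ε) (PZeps f φ Z₂ ε) := by
  refine le_of_forall_gt fun d hd ↦ ?_
  simp only [PZeps, max_lt_iff, iInf_lt_iff] at hd
  obtain ⟨⟨α₁, h₁, hα₁⟩, α₂, h₂, hα₂⟩ := hd
  have hmax : mZ f φ (Z₁ ∪ Z₂) (max α₁ α₂) ε = 0 :=
    mZ_union_eq_zero (mZ_eq_zero_of_le h₁ (le_max_left _ _))
      (mZ_eq_zero_of_le h₂ (le_max_right _ _))
  refine (PZeps_le_of_mZ_eq_zero hmax).trans_lt ?_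
  rw [EReal.coe_strictMono.monotone.map_max]
  exact max_lt hα₁ hα₂

end Cover

lemma smul_add_smul_apply_eq_one_iff {X : Type*} [MeasurableSpace X] {μ₁ μ₂ : Measure X}
    [IsProbabilityMeasure μ₁] [IsProbabilityMeasure μ₂] {a b : ℝ≥0∞} (ha : a ≠ 0) (hb : b ≠ 0)
    (hab : a + b = 1) {Z : Set X} (hZ : MeasurableSet Z) :
    (a • μ₁ + b • μ₂) Z = 1 ↔ μ₁ Z = 1 ∧ μ₂ Z = 1 := by
  have := isProbabilityMeasure_smul_add_smul hab μ₁ μ₂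
  rw [← prob_compl_eq_zero_iff hZ, ← prob_compl_eq_zero_iff hZ, ← prob_compl_eq_zero_iff hZ]
  simp [ha, hb]

section MixturePressure

variable {X : Type*} [MetricSpace X] [MeasurableSpace X] {μ₁ μ₂ : Measure X}
  [IsProbabilityMeasure μ₁] [IsProbabilityMeasure μ₂] {a b : ℝ≥0∞}

/-- The measure theoretic pressure at a fixed scale `ε`, whose supremum over `ε > 0` is `Pmu`. -/
noncomputable def PmuEps (f : X → X) (φ : X → ℝ) (μ : Measure X) (ε : ℝ) : EReal :=
  ⨅ (Z : Set X) (_ : MeasurableSet Z ∧ μ Z = 1), PZeps f φ Z ε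

lemma PmuEps_smul_add_smul (ha : a ≠ 0) (hb : b ≠ 0) (hab : a + b = 1) (f : X → X) (φ : X → ℝ)
    (ε : ℝ) : PmuEps f φ (a • μ₁ + b • μ₂) ε = max (PmuEps f φ μ₁ ε) (PmuEps f φ μ₂ ε) := by
  refine le_antisymm (le_of_forall_gt fun d hd ↦ ?_) (le_iInf₂ fun Z ⟨hZ, hμZ⟩ ↦ ?_)
  · simp only [PmuEps, max_lt_iff, iInf_lt_iff] at hd
    obtain ⟨⟨Z₁, ⟨hZ₁, hμ₁⟩, hd₁⟩, Z₂, ⟨hZ₂, hμ₂⟩, hd₂⟩ := hd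
    refine (iInf₂_le (Z₁ ∪ Z₂) ⟨hZ₁.union hZ₂, ?_⟩).trans_lt
      ((PZeps_union_le f φ Z₁ Z₂ ε).trans_lt (max_lt hd₁ hd₂))
    rw [smul_add_smul_apply_eq_one_iff ha hb hab (hZ₁.union hZ₂)]
    exact ⟨prob_le_one.antisymm (hμ₁ ▸ measure_mono subset_union_left),
      prob_le_one.antisymm (hμ₂ ▸ measure_mono subset_union_right)⟩
  · rw [smul_add_smul_apply_eq_one_iff ha hb hab hZ] at hμZ
    exact max_le (iInf₂_le Z ⟨hZ, hμZ.1⟩) (iInf₂_le Z ⟨hZ, hμZ.2⟩)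

lemma Pmu_smul_add_smul (ha : a ≠ 0) (hb : b ≠ 0) (hab : a + b = 1) (f : X → X) (φ : X → ℝ) :
    Pmu f φ (a • μ₁ + b • μ₂) = max (Pmu f φ μ₁) (Pmu f φ μ₂) := by
  change ⨆ (ε : ℝ) (_ : 0 < ε), PmuEps f φ (a • μ₁ + b • μ₂) ε = _
  simp only [PmuEps_smul_add_smul ha hb hab, iSup_sup_eq]
  rfl

end MixturePressure

section HeavyWords

lemma card_heavy_fiber_le {X ι : Type*} [MeasurableSpace X] [Finite ι] [MeasurableSpace ι]
    [MeasurableSingletonClass ι] (μ : Measure X) [IsProbabilityMeasure μ] {φ : X → ι}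
    (hφ : Measurable φ) (s : ℝ) :
    (Nat.card {i // Real.exp (-s) ≤ μ.real (φ ⁻¹' {i})} : ℝ) ≤ Real.exp s := by
  classical
  have := Fintype.ofFinite ι
  rw [← div_le_one (Real.exp_pos s), div_eq_mul_inv, ← Real.exp_neg]
  calc Nat.card {i // Real.exp (-s) ≤ μ.real (φ ⁻¹' {i})} * Real.exp (-s)
      = ∑ i with Real.exp (-s) ≤ μ.real (φ ⁻¹' {i}), Real.exp (-s) := by
        rw [Finset.sum_const, nsmul_eq_mul, Nat.card_eq_fintype_card, Fintype.card_subtype]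
    _ ≤ ∑ i with Real.exp (-s) ≤ μ.real (φ ⁻¹' {i}), μ.real (φ ⁻¹' {i}) :=
        Finset.sum_le_sum fun i hi ↦ (Finset.mem_filter.1 hi).2
    _ ≤ ∑ i, μ.real (φ ⁻¹' {i}) :=
        Finset.sum_le_univ_sum_of_nonneg fun i ↦ measureReal_nonneg
    _ = 1 := sum_measureReal_fiber μ hφ

lemma tsum_exp_heavy_fiber_le {X ι : Type*} [MeasurableSpace X] [Finite ι] [MeasurableSpace ι]
    [MeasurableSingletonClass ι] (μ : Measure X) [IsProbabilityMeasure μ] {φ : X → ι}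
    (hφ : Measurable φ) (s t : ℝ) :
    ∑' _ : {i // Real.exp (-s) ≤ μ.real (φ ⁻¹' {i})}, ENNReal.ofReal (Real.exp (-t)) ≤
      ENNReal.ofReal (Real.exp (-(t - s))) := by
  have := Fintype.ofFinite {i // Real.exp (-s) ≤ μ.real (φ ⁻¹' {i})}
  rw [tsum_fintype, Finset.sum_const, Finset.card_univ, ← Nat.card_eq_fintype_card,
    ← ENNReal.ofReal_nsmul, nsmul_eq_mul, neg_sub, sub_eq_add_neg, Real.exp_add]
  gcongr
  exact card_heavy_fiber_le μ hφ s

lemma summable_exp_neg_mul {r : ℝ} (hr : 0 < r) : Summable fun n : ℕ ↦ Real.exp (-(r * n)) := by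
  refine (Real.summable_exp_nat_mul_iff.2 (neg_lt_zero.2 hr)).congr fun n ↦ ?_
  ring_nf

lemma tendsto_tsum_exp_neg_mul_add {r : ℝ} (hr : 0 < r) :
    Tendsto (fun M : ℕ ↦ ∑' n : ℕ, ENNReal.ofReal (Real.exp (-(r * (n + M : ℕ))))) atTop
      (𝓝 0) :=
  ENNReal.tendsto_sum_nat_add (fun n : ℕ ↦ ENNReal.ofReal (Real.exp (-(r * n))))
    (summable_exp_neg_mul hr).tsum_ofReal_ne_top

variable {X : Type*} [MetricSpace X] {f : X → X} {Z : Set X} {c ε : ℝ}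

lemma Mcov_le_tsum_of_countable [Nonempty X] {ι : Type*} [Countable ι] (hc : 0 < c) {N : ℕ}
    (p : ι → X × ℕ) (hp : ∀ i, N ≤ (p i).2) (hcover : Z ⊆ ⋃ i, bowenBall f (p i).1 (p i).2 ε) :
    Mcov f (fun _ ↦ 0) Z c N ε ≤ ∑' i, ENNReal.ofReal (Real.exp (-(c * (p i).2))) := by
  refine ENNReal.le_of_forall_pos_le_add fun δ hδ _ ↦ ?_
  obtain ⟨M, hM, hNM⟩ := (((tendsto_tsum_exp_neg_mul_add hc).eventually
    (gt_mem_nhds (ENNReal.coe_pos.2 hδ))).and (eventually_ge_atTop N)).exists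
  let padded : ι ⊕ ℕ → X × ℕ := Sum.elim p fun n ↦ (Classical.arbitrary X, n + M)
  refine (Mcov_le_tsum padded (Sum.forall.2 ⟨hp, fun n ↦ hNM.trans (Nat.le_add_left M n)⟩)
    ?_).trans ?_
  · rw [iUnion_sum]
    exact hcover.trans subset_union_left
  · simp only [birk_zero, add_zero, neg_mul]
    rw [Summable.tsum_sum ENNReal.summable ENNReal.summable]
    exact add_le_add_right hM.le _

variable [MeasurableSpace X] {S : Type*} [Finite S] [MeasurableSpace S]
  [MeasurableSingletonClass S] {g : X → S} {b : ℝ} {ν : Measure X} [IsProbabilityMeasure ν]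

lemma Mcov_le_of_forall_exists_heavy (hf : Measurable f) (hg : Measurable g)
    (hgε : ∀ x y, g x = g y → dist x y < ε) (hc : 0 < c) (M : ℕ)
    (hZ : ∀ x ∈ Z, ∃ n ≥ M, Real.exp (-(b * n)) ≤ fiberMeasure ν (itinerary f g n) x) :
    Mcov f (fun _ ↦ 0) Z c M ε ≤
      ∑' n : ℕ, ENNReal.ofReal (Real.exp (-((c - b) * (n + M : ℕ)))) := by
  have := nonempty_of_isProbabilityMeasure ν
  let Heavy (n : ℕ) := {w // Real.exp (-(b * n)) ≤ ν.real (itinerary f g n ⁻¹' {w})}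
  have exists_rep {n : ℕ} (w : Heavy n) : ∃ x, itinerary f g n x = w.1 :=
    nonempty_of_measureReal_ne_zero ((Real.exp_pos _).trans_le w.2).ne'
  choose rep hrep using @exists_rep
  refine (Mcov_le_tsum_of_countable (ι := Σ n, Heavy (n + M)) hc (fun i ↦ (rep i.2, i.1 + M))
    (fun i ↦ Nat.le_add_left M i.1) fun x hx ↦ ?_).trans ?_
  · obtain ⟨n, hn, hheavy⟩ := hZ x hx
    obtain ⟨m, rfl⟩ := Nat.exists_eq_add_of_le' hn
    exact mem_iUnion.2 ⟨⟨m, _, hheavy⟩, fun i hi ↦ hgε _ _ (congrFun (hrep ⟨_, hheavy⟩) ⟨i, hi⟩)⟩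
  · rw [ENNReal.tsum_sigma']
    refine ENNReal.tsum_le_tsum fun n ↦ ?_
    exact (tsum_exp_heavy_fiber_le ν (measurable_itinerary hf hg (n + M)) (b * (n + M : ℕ))
      (c * (n + M : ℕ))).trans_eq (by rw [sub_mul])

lemma mZ_eq_zero_of_frequently_heavy (hf : Measurable f) (hg : Measurable g)
    (hgε : ∀ x y, g x = g y → dist x y < ε) (hb : 0 ≤ b) (hbc : b < c)
    (hZ : ∀ x ∈ Z, ∃ᶠ n : ℕ in atTop,
      Real.exp (-(b * n)) ≤ fiberMeasure ν (itinerary f g n) x) :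
    mZ f (fun _ ↦ 0) Z c ε = 0 := by
  have Mcov_mono : Monotone fun N ↦ Mcov f (fun _ ↦ 0) Z c N ε := fun M N hMN ↦
    iInf_mono fun p ↦ iInf_mono' fun hp ↦ ⟨⟨fun i ↦ hMN.trans (hp.1 i), hp.2⟩, le_rfl⟩
  refine le_bot_iff.1 (le_of_tendsto_of_tendsto' (tendsto_atTop_iSup Mcov_mono)
    (tendsto_tsum_exp_neg_mul_add (sub_pos.2 hbc)) fun M ↦ ?_)
  exact Mcov_le_of_forall_exists_heavy hf hg hgε (hb.trans_lt hbc) M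
    fun x hx ↦ frequently_atTop.1 (hZ x hx) M

end HeavyWords

section TypicalWords

lemma ae_frequently_exp_neg_mul_le {X : Type*} [MeasurableSpace X] {ν : Measure X}
    [IsFiniteMeasure ν] {f : X → X} (hf : Ergodic f ν) {P : ℕ → X → ℝ} (hP : ∀ n, Measurable (P n))
    (hPf : ∀ n x, P (n + 1) x ≤ P n (f x)) {a b : ℝ} (hab : a < b)
    (h : ¬ ∀ᵐ x ∂ν, ∀ᶠ n : ℕ in atTop, P n x < Real.exp (-(a * n))) :
    ∀ᵐ x ∂ν, ∃ᶠ n : ℕ in atTop, Real.exp (-(b * n)) ≤ P n x := by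
  -- The tolerance `C` makes this set forward invariant: `f` shifts the index by one.
  let A : Set X := {x | ∃ C : ℕ, ∃ᶠ n : ℕ in atTop, Real.exp (-(a * n) - C) ≤ P n x}
  have measurableSet_A : MeasurableSet A := by
    have A_eq : A =
        ⋃ C : ℕ, limsup (fun n : ℕ ↦ {x | Real.exp (-(a * n) - C) ≤ P n x}) atTop := by
      ext x
      simp only [A, mem_iUnion, mem_limsup_iff_frequently_mem, mem_ofPred_eq]
    rw [A_eq]
    exact .iUnion fun C ↦ .measurableSet_limsup fun n ↦ measurableSet_le measurable_const (hP n)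
  have A_subset_preimage : A ⊆ f ⁻¹' A := by
    rintro x ⟨C, hC⟩
    refine ⟨C + ⌈a⌉₊, frequently_atTop.2 fun N ↦ ?_⟩
    obtain ⟨n, hn, hle⟩ := frequently_atTop.1 hC (N + 1)
    obtain ⟨m, rfl⟩ := Nat.exists_eq_add_of_le' (Nat.le_of_add_left_le hn)
    refine ⟨m, Nat.le_of_add_le_add_right hn, le_trans (Real.exp_le_exp.2 ?_) (hle.trans (hPf m x))⟩
    push_cast
    linarith [Nat.le_ceil a]
  rcases hf.ae_empty_or_univ_of_ae_le_preimage measurableSet_A.nullMeasurableSet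
    (.of_forall A_subset_preimage) with hA | hA
  · refine absurd ?_ h
    filter_upwards [measure_eq_zero_iff_ae_notMem.1 (ae_eq_empty.1 hA)] with x hx
    have hx₀ : ¬ ∃ᶠ n : ℕ in atTop, Real.exp (-(a * n)) ≤ P n x := fun hfreq ↦
      hx ⟨0, by simpa using hfreq⟩
    simpa using hx₀
  · filter_upwards [eventuallyEq_univ.1 hA] with x ⟨C, hC⟩
    refine (hC.and_eventually (eventually_ge_atTop ⌈C / (b - a)⌉₊)).mono fun n ⟨hle, hn⟩ ↦
      le_trans (Real.exp_le_exp.2 ?_) hle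
    have hCn : C ≤ n * (b - a) := (div_le_iff₀ (sub_pos.2 hab)).1 (Nat.ceil_le.1 hn)
    linarith

variable {X S : Type*} [MeasurableSpace X] [MeasurableSpace S] [MeasurableSingletonClass S]
  {ν : Measure X} {f : X → X} {g : X → S}

lemma measurable_fiberMeasure {ι : Type*} [Countable ι] [MeasurableSpace ι]
    [MeasurableSingletonClass ι] (ν : Measure X) {φ : X → ι} (hφ : Measurable φ) :
    Measurable (fiberMeasure ν φ) :=
  (measurable_of_countable fun i ↦ ν.real (φ ⁻¹' {i})).comp hφ

lemma fiberMeasure_itinerary_succ_le [IsFiniteMeasure ν]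
    (hf : MeasurePreserving f ν ν) (hg : Measurable g) (n : ℕ) (x : X) :
    fiberMeasure ν (itinerary f g (n + 1)) x ≤ fiberMeasure ν (itinerary f g n) (f x) := by
  rw [fiberMeasure, fiberMeasure, ← hf.measureReal_preimage
    (measurable_itinerary hf.measurable hg n (measurableSet_singleton _)).nullMeasurableSet]
  exact measureReal_mono fun y hy ↦ funext fun i ↦ congrFun hy i.succ

variable [Fintype S] [IsProbabilityMeasure ν]

lemma lintegral_neg_log_fiberMeasure_div {ι : Type*} [Fintype ι] [MeasurableSpace ι]
    [MeasurableSingletonClass ι] {φ : X → ι} (hφ : Measurable φ) (n : ℕ) :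
    ∫⁻ x, ENNReal.ofReal (-(fiberMeasure ν φ x).log / n) ∂ν =
      ENNReal.ofReal (fiberEntropy ν φ / n) := by
  have neg_log_div_nonneg (x : X) : 0 ≤ -(fiberMeasure ν φ x).log / n :=
    div_nonneg (neg_nonneg.2 (Real.log_nonpos measureReal_nonneg measureReal_le_one)) n.cast_nonneg
  rw [← ofReal_integral_eq_lintegral_ofReal ((integrable_neg_log_fiberMeasure ν hφ).div_const _)
    (.of_forall neg_log_div_nonneg), integral_div, ← fiberEntropy_eq_integral ν hφ]

lemma not_ae_eventually_fiberMeasure_itinerary_lt (hf : MeasurePreserving f ν ν)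
    (hg : Measurable g) {a : ℝ} (ha : entropyRate f ν g < a) :
    ¬ ∀ᵐ x ∂ν, ∀ᶠ n : ℕ in atTop,
      fiberMeasure ν (itinerary f g n) x < Real.exp (-(a * n)) := by
  intro hae
  let information (n : ℕ) (x : X) : ℝ≥0∞ :=
    .ofReal (-(fiberMeasure ν (itinerary f g n) x).log / n)
  have le_liminf : ∀ᵐ x ∂ν, ENNReal.ofReal a ≤ liminf (information · x) atTop := by
    filter_upwards [hae, ae_all_iff.2 fun n ↦ ae_fiberMeasure_pos ν (itinerary f g n)]
      with x hx hpos
    refine le_liminf_of_le (by isBoundedDefault) ?_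
    filter_upwards [hx, eventually_gt_atTop 0] with n hn hn₀
    refine ENNReal.ofReal_le_ofReal ((le_div_iff₀ (Nat.cast_pos.2 hn₀)).2 ?_)
    linarith [(Real.log_lt_iff_lt_exp (hpos n)).2 hn]
  have hle : ENNReal.ofReal a ≤ ENNReal.ofReal (entropyRate f ν g) :=
    calc ENNReal.ofReal a
        = ∫⁻ _, ENNReal.ofReal a ∂ν := by simp
      _ ≤ ∫⁻ x, liminf (information · x) atTop ∂ν := lintegral_mono_ae le_liminf
      _ ≤ liminf (fun n ↦ ∫⁻ x, information n x ∂ν) atTop :=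
          lintegral_liminf_le fun n ↦ ((measurable_fiberMeasure ν
            (measurable_itinerary hf.measurable hg n)).log.neg.div_const _).ennreal_ofReal
      _ = ENNReal.ofReal (entropyRate f ν g) := by
          simp only [information,
            lintegral_neg_log_fiberMeasure_div (measurable_itinerary hf.measurable hg _)]
          exact (ENNReal.tendsto_ofReal (tendsto_entropyRate hf hg)).liminf_eq
  exact ha.not_ge ((ENNReal.ofReal_le_ofReal_iff (entropyRate_nonneg f ν g)).1 hle)

lemma ae_frequently_exp_neg_mul_le_fiberMeasure_itinerary (hf : Ergodic f ν) (hg : Measurable g)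
    {b : ℝ} (hb : entropyRate f ν g < b) :
    ∀ᵐ x ∂ν, ∃ᶠ n : ℕ in atTop,
      Real.exp (-(b * n)) ≤ fiberMeasure ν (itinerary f g n) x := by
  obtain ⟨a, ha, hab⟩ := exists_between hb
  exact ae_frequently_exp_neg_mul_le hf
    (fun n ↦ measurable_fiberMeasure ν (measurable_itinerary hf.measurable hg n))
    (fiberMeasure_itinerary_succ_le hf.toMeasurePreserving hg) hab
    (not_ae_eventually_fiberMeasure_itinerary_lt hf.toMeasurePreserving hg ha)

end TypicalWords

section ErgodicPressure

variable {X : Type*} [MetricSpace X] [CompactSpace X] [MeasurableSpace X]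

lemma exists_measurable_fin_dist_lt [OpensMeasurableSpace X] {ε : ℝ} (hε : 0 < ε) :
    ∃ (k : ℕ) (g : X → Fin k), Measurable g ∧ ∀ x y, g x = g y → dist x y < ε := by
  obtain ⟨t, -, ht, hcover⟩ := finite_cover_balls_of_compact (isCompact_univ (X := X)) (half_pos hε)
  have := ht.to_subtype
  let ballsThrough (x : X) (p : t) : Prop := dist x p < ε / 2
  have measurable_ballsThrough : Measurable ballsThrough :=
    measurable_pi_iff.2 fun p ↦ measurableSet_setOfPred.1 Metric.isOpen_ball.measurableSet
  let e := Finite.equivFin (t → Prop)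
  refine ⟨_, e ∘ ballsThrough, (measurable_of_finite e).comp measurable_ballsThrough,
    fun x y hxy ↦ ?_⟩
  obtain ⟨p, hp, hx⟩ := mem_iUnion₂.1 (hcover (mem_univ x))
  have hy : dist y p < ε / 2 := (congrFun (e.injective hxy) ⟨p, hp⟩).mp hx
  exact (dist_triangle_right x y p).trans_lt (by linarith [Metric.mem_ball.1 hx])

variable {f : X → X} {ν : Measure X} [IsProbabilityMeasure ν]

lemma PmuEps_le_ksEntropy [OpensMeasurableSpace X] (hf : Ergodic f ν) {ε : ℝ} (hε : 0 < ε) :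
    PmuEps f (fun _ ↦ 0) ν ε ≤ ksEntropy f ν := by
  obtain ⟨k, g, hg, hgε⟩ := exists_measurable_fin_dist_lt (X := X) hε
  refine le_trans ?_ (entropyRate_le_ksEntropy hf.toMeasurePreserving hg)
  refine EReal.le_of_forall_lt_iff_le.1 fun c hc ↦ ?_
  obtain ⟨b, hgb, hbc⟩ := exists_between (EReal.coe_lt_coe_iff.1 hc)
  obtain ⟨Z, hνZ, hZ, hfreq⟩ :=
    (ae_frequently_exp_neg_mul_le_fiberMeasure_itinerary hf hg hgb).exists_measurable_mem
  have hb : 0 ≤ b := (entropyRate_nonneg f ν g).trans hgb.le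
  exact iInf₂_le_of_le Z ⟨hZ, (prob_compl_eq_zero_iff hZ).1 hνZ⟩
    (PZeps_le_of_mZ_eq_zero (mZ_eq_zero_of_frequently_heavy hf.measurable hg hgε hb hbc hfreq))

theorem Pmu_eq_ksEntropy [BorelSpace X] (hf : Ergodic f ν) :
    Pmu f (fun _ ↦ 0) ν = ksEntropy f ν :=
  le_antisymm (iSup₂_le fun _ ↦ PmuEps_le_ksEntropy hf) (ksEntropy_le_Pmu hf.toMeasurePreserving)

end ErgodicPressure

end Paper

theorem entropyPressure_gt_entropy_of_average_general {X : Type*} [MetricSpace X] [CompactSpace X]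
    [MeasurableSpace X] [BorelSpace X] {f : X → X} {μ₁ μ₂ : Measure X} [IsProbabilityMeasure μ₁]
    [IsProbabilityMeasure μ₂] (herg₁ : Ergodic f μ₁) (herg₂ : Ergodic f μ₂)
    (hfin : ksEntropy f μ₁ ≠ ⊤) (hlt : ksEntropy f μ₂ < ksEntropy f μ₁) {a b : ℝ≥0∞}
    (ha : a ≠ 0) (hb : b ≠ 0) (hab : a + b = 1) :
    MeasurePreserving f (a • μ₁ + b • μ₂) (a • μ₁ + b • μ₂) ∧
    Pmu f (fun _ ↦ 0) (a • μ₁ + b • μ₂) = ksEntropy f μ₁ ∧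
    ksEntropy f (a • μ₁ + b • μ₂) = a * ksEntropy f μ₁ + b * ksEntropy f μ₂ ∧
    ksEntropy f (a • μ₁ + b • μ₂) < Pmu f (fun _ ↦ 0) (a • μ₁ + b • μ₂) := by
  have h₁ := herg₁.toMeasurePreserving
  have h₂ := herg₂.toMeasurePreserving
  have hPmu : Pmu f (fun _ ↦ 0) (a • μ₁ + b • μ₂) = ksEntropy f μ₁ := by
    rw [Pmu_smul_add_smul ha hb hab, Pmu_eq_ksEntropy herg₁, Pmu_eq_ksEntropy herg₂,
      max_eq_left hlt.le]
  exact ⟨measurePreserving_smul_add_smul a b h₁ h₂, hPmu, ksEntropy_smul_add_smul hab h₁ h₂,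
    hPmu ▸ ksEntropy_smul_add_smul_lt hab hb h₁ h₂ hfin hlt⟩

/-- Remark 4.8: if `μ₁, μ₂` are ergodic with `h_{μ₁}(f) > h_{μ₂}(f)` (and finite
`h_{μ₁}(f)`), then `μ = ½μ₁ + ½μ₂` is `f`-invariant, `E_μ(f) = h_{μ₁}(f)`,
`h_μ(f) = ½(h_{μ₁}(f) + h_{μ₂}(f))`, and in particular `E_μ(f) > h_μ(f)`:
the inequality `E_μ(f) ≥ h_μ(f)` can be strict. -/
theorem entropyPressure_gt_entropy_of_average {X : Type*} [MetricSpace X] [CompactSpace X] [MeasurableSpace X] [BorelSpace X]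
    (f : X → X) (hf : Continuous f)
    (μ₁ μ₂ : Measure X) (hp₁ : IsProbabilityMeasure μ₁) (hp₂ : IsProbabilityMeasure μ₂)
    (herg₁ : Ergodic f μ₁) (herg₂ : Ergodic f μ₂)
    (hfin : ksEntropy f μ₁ ≠ ⊤) (hlt : ksEntropy f μ₂ < ksEntropy f μ₁) :
    MeasurePreserving f ((2 : ℝ≥0∞)⁻¹ • μ₁ + (2 : ℝ≥0∞)⁻¹ • μ₂)
      ((2 : ℝ≥0∞)⁻¹ • μ₁ + (2 : ℝ≥0∞)⁻¹ • μ₂) ∧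
    Pmu f (fun _ => 0) ((2 : ℝ≥0∞)⁻¹ • μ₁ + (2 : ℝ≥0∞)⁻¹ • μ₂) = ksEntropy f μ₁ ∧
    ksEntropy f ((2 : ℝ≥0∞)⁻¹ • μ₁ + (2 : ℝ≥0∞)⁻¹ • μ₂) =
      (((1 : ℝ) / 2 : ℝ) : EReal) * (ksEntropy f μ₁ + ksEntropy f μ₂) ∧
    ksEntropy f ((2 : ℝ≥0∞)⁻¹ • μ₁ + (2 : ℝ≥0∞)⁻¹ • μ₂) <
      Pmu f (fun _ => 0) ((2 : ℝ≥0∞)⁻¹ • μ₁ + (2 : ℝ≥0∞)⁻¹ • μ₂) := by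
  have half_coe : (((2 : ℝ≥0∞)⁻¹ : ℝ≥0∞) : EReal) = ((1 / 2 : ℝ) : EReal) := by
    rw [← EReal.coe_ennreal_toReal (ENNReal.inv_ne_top.2 two_ne_zero)]
    simp
  have half_ne_zero : (2 : ℝ≥0∞)⁻¹ ≠ 0 := ENNReal.inv_ne_zero.2 ENNReal.ofNat_ne_top
  rw [EReal.left_distrib_of_nonneg (ksEntropy_nonneg herg₁.toMeasurePreserving)
    (ksEntropy_nonneg herg₂.toMeasurePreserving), ← half_coe]
  exact entropyPressure_gt_entropy_of_average_general herg₁ herg₂ hfin hlt half_ne_zero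
    half_ne_zero ENNReal.inv_two_add_inv_two
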